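/- arXiv:1807.04146 — 2 statements merged into one kernel-verified Lean document; each statement's English description precedes it below -/
import Mathlib

section
/- Suppose ∂_u f(t,u) is locally Lipschitz continuous in u uniformly with respect to t, and let p ∈ X_per. If there exists a symmetrically decreasing T-periodic entire solution U(x,t) of U_t = U_xx + f(t,U) on ℝ × ℝ whose base is p (i.e. U(x,t) → p(t) as |x| → ∞), then p ∉ Y_per; that is, for every ε > 0 there exists a ∈ (p(0), p(0)+ε) such that h(T;a) < a. -/
open Filter Topology Set MeasureTheory

noncomputable section

/-- `u` satisfies `u_t = u_xx + f(t,u)` for `x ∈ sx`, `t ∈ st`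
(with the required differentiability in space and time). -/
def SatPDE (f u : ℝ → ℝ → ℝ) (sx st : Set ℝ) : Prop :=
  ∀ x ∈ sx, ∀ t ∈ st,
    DifferentiableAt ℝ (fun y => u y t) x ∧
    DifferentiableAt ℝ (deriv fun y => u y t) x ∧
    HasDerivAt (fun τ => u x τ) (deriv (deriv fun y => u y t) x + f t (u x t)) t

/-- entire solution of `U_t = U_xx + f(t,U)` on `ℝ × ℝ`. -/
def EntireSol (f U : ℝ → ℝ → ℝ) : Prop := SatPDE f U Set.univ Set.univ

/-- classical (for `t > 0`) solution of the Cauchy problem with initial datum `u₀`. -/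
def CauchySol (f : ℝ → ℝ → ℝ) (u₀ : ℝ → ℝ) (u : ℝ → ℝ → ℝ) : Prop :=
  SatPDE f u Set.univ (Set.Ioi 0) ∧
  ContinuousOn (fun q : ℝ × ℝ => u q.1 q.2) (Set.univ ×ˢ Set.Ioi 0) ∧
  ∀ x, u x 0 = u₀ x

/-- `U` is `T`-periodic in time. -/
def TPer (T : ℝ) (U : ℝ → ℝ → ℝ) : Prop := ∀ x t, U x (t + T) = U x t

/-- `U` is spatially constant. -/
def SpatConst (U : ℝ → ℝ → ℝ) : Prop := ∀ x y t, U x t = U y t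

/-- `U` is symmetrically decreasing with respect to `x₀`. -/
def SymDecr (U : ℝ → ℝ → ℝ) (x₀ : ℝ) : Prop :=
  (∀ x t, U (2 * x₀ - x) t = U x t) ∧ ∀ x t : ℝ, x₀ < x → deriv (fun y => U y t) x < 0

/-- `v` is symmetric with respect to `x₀` and nonincreasing away from `x₀`. -/
def SymNonincr (v : ℝ → ℝ → ℝ) (x₀ : ℝ) : Prop :=
  (∀ x t, v (2 * x₀ - x) t = v x t) ∧
  (∀ x t : ℝ, x < x₀ → 0 ≤ deriv (fun y => v y t) x) ∧
  (∀ x t : ℝ, x₀ < x → deriv (fun y => v y t) x ≤ 0)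

/-- `g` solves the ODE `g' = f(t, g)` on the set `s`. -/
def ODESolOn (f : ℝ → ℝ → ℝ) (g : ℝ → ℝ) (s : Set ℝ) : Prop :=
  ∀ t ∈ s, HasDerivAt g (f t (g t)) t

/-- `p` is a nonnegative `T`-periodic solution of `p' = f(t,p)`. -/
def XPer (T : ℝ) (f : ℝ → ℝ → ℝ) (p : ℝ → ℝ) : Prop :=
  (∀ t, 0 ≤ p t) ∧ (∀ t, p (t + T) = p t) ∧ ODESolOn f p Set.univ

/-- `p` is the base of `U`, i.e. `U(x,t) → p(t)` as `|x| → ∞`. -/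
def HasBase (U : ℝ → ℝ → ℝ) (p : ℝ → ℝ) : Prop :=
  ∀ t, Tendsto (fun x => U x t) atTop (nhds (p t)) ∧
    Tendsto (fun x => U x t) atBot (nhds (p t))

/-- `U` is an ω-limit solution of `u`: an entire solution which is the locally uniform
limit of `u(x, t + kⱼ T)` for some sequence of positive integers `kⱼ → ∞`. -/
def OmegaLimitSol (T : ℝ) (f u U : ℝ → ℝ → ℝ) : Prop :=
  EntireSol f U ∧
  ∃ k : ℕ → ℕ, StrictMono k ∧ (∀ j, 0 < k j) ∧
    TendstoLocallyUniformly
      (fun j (q : ℝ × ℝ) => u q.1 (q.2 + (k j : ℝ) * T)) (fun q => U q.1 q.2) atTop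

/-- `φ` is an ω-limit point of `u`: `u(·, kⱼ T) → φ` in `L^∞_loc(ℝ)`. -/
def OmegaLimitPt (T : ℝ) (u : ℝ → ℝ → ℝ) (φ : ℝ → ℝ) : Prop :=
  ∃ k : ℕ → ℕ, StrictMono k ∧ (∀ j, 0 < k j) ∧
    TendstoLocallyUniformly (fun j x => u x ((k j : ℝ) * T)) φ atTop

/-- the solution `h(·;a)` of `h' = f(t,h)`, `h(0) = a`, is `T`-monotone nondecreasing
(formulated for every solution with initial value `a`; the solution is unique). -/
def TMonNondecFrom (T : ℝ) (f : ℝ → ℝ → ℝ) (a : ℝ) : Prop :=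
  ∀ g : ℝ → ℝ, ODESolOn f g (Set.Ici 0) → g 0 = a → ∀ t : ℝ, 0 ≤ t → g t ≤ g (t + T)

/-- the solution `h(·;a)` is `T`-monotone decreasing. -/
def TMonDecFrom (T : ℝ) (f : ℝ → ℝ → ℝ) (a : ℝ) : Prop :=
  ∀ g : ℝ → ℝ, ODESolOn f g (Set.Ici 0) → g 0 = a → ∀ t : ℝ, 0 ≤ t → g (t + T) < g t

/-- the solution `h(·;a)` is `T`-monotone nonincreasing. -/
def TMonNonincFrom (T : ℝ) (f : ℝ → ℝ → ℝ) (a : ℝ) : Prop :=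
  ∀ g : ℝ → ℝ, ODESolOn f g (Set.Ici 0) → g 0 = a → ∀ t : ℝ, 0 ≤ t → g (t + T) ≤ g t

/-- `p ∈ Y_per`. -/
def YPer (T : ℝ) (f : ℝ → ℝ → ℝ) (p : ℝ → ℝ) : Prop :=
  XPer T f p ∧ ∃ ε > 0, ∀ a ∈ Set.Ioo (p 0) (p 0 + ε), TMonNondecFrom T f a

/-- `p` is linearly stable: `∫₀ᵀ ∂ᵤf(t, p(t)) dt < 0`. -/
def LinStable (T : ℝ) (f : ℝ → ℝ → ℝ) (p : ℝ → ℝ) : Prop :=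
  (∫ t in (0:ℝ)..T, deriv (f t) (p t)) < 0

/-- `p` is stable from above for the ODE `h' = f(t,h)`. -/
def StableFromAbove (f : ℝ → ℝ → ℝ) (p : ℝ → ℝ) : Prop :=
  ∀ ε > 0, ∃ δ > 0, ∀ a ∈ Set.Icc (p 0) (p 0 + δ),
    ∀ g : ℝ → ℝ, ODESolOn f g (Set.Ici 0) → g 0 = a → ∀ t : ℝ, 0 ≤ t → |g t - p t| ≤ ε

/-- `p` is stable from below for the ODE `h' = f(t,h)`. -/
def StableFromBelow (f : ℝ → ℝ → ℝ) (p : ℝ → ℝ) : Prop :=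
  ∀ ε > 0, ∃ δ > 0, ∀ a ∈ Set.Icc (p 0 - δ) (p 0),
    ∀ g : ℝ → ℝ, ODESolOn f g (Set.Ici 0) → g 0 = a → ∀ t : ℝ, 0 ≤ t → |g t - p t| ≤ ε

/-- `Zsc w`: the number of sign changes of `w` on `ℝ` (a value in `ℕ∞`). -/
def Zsc (w : ℝ → ℝ) : ℕ∞ :=
  ⨆ k ∈ {k : ℕ | ∃ x : Fin (k + 1) → ℝ, StrictMono x ∧
      ∀ i : Fin k, w (x i.castSucc) * w (x i.succ) < 0}, (k : ℕ∞)

/-!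
Suppose that `a ≤ h(T; a)` for every `a` slightly above `p 0`. Let `q` be the convex parabola
that decreases from `1` at `X` to `0` at `X + R`, and put `w_θ(x, t) = h(t; p 0 + θ q(x))`.
Since `f` is `C^{1,1}` in `u`, the flow is so close to linear near `p` that, for `θ ≤ δ` with
`δ` small independently of `R`, `w_θ` stays strictly convex in `x`; solving `w_t = f(t, w)` it
is thus a strict subsolution of the PDE. Raise `θ` from `0`: the first contact of `w_θ` with `U`
from below cannot lie on the lateral boundary, where `w_θ < U`, nor at a positive time, where
convexity would make `U_xx > 0` and hence `U_t > w_t`. A contact at time `0` would reappear at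
time `T`, as `w_θ(x, ·)` does not decrease over a period. So `w_δ < U` for every `R`, and
`R → ∞` gives `U(x, 0) ≥ p 0 + δ` for all `x ≥ X`, against `U(x, 0) → p 0`.
-/

open scoped NNReal

theorem tendsto_const_add_nhdsGT_zero (x : ℝ) : Tendsto (fun d => x + d) (𝓝[>] 0) (𝓝 x) :=
  tendsto_nhdsWithin_of_tendsto_nhds ((continuous_const_add x).tendsto' 0 x (add_zero x))

theorem tendsto_const_sub_nhdsGT_zero (x : ℝ) : Tendsto (fun d => x - d) (𝓝[>] 0) (𝓝 x) :=
  tendsto_nhdsWithin_of_tendsto_nhds ((continuous_sub_left x).tendsto' 0 x (sub_zero x))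

theorem tendsto_symm_second_difference_div_sq {φ : ℝ → ℝ} {x : ℝ}
    (hφ : ∀ᶠ y in 𝓝 x, DifferentiableAt ℝ φ y) (hφ' : DifferentiableAt ℝ (deriv φ) x) :
    Tendsto (fun d => (φ (x + d) + φ (x - d) - 2 * φ x) / d ^ 2) (𝓝[>] 0)
      (𝓝 (deriv (deriv φ) x)) := by
  have hpos : ∀ᶠ d in 𝓝[>] (0 : ℝ), d ≠ 0 := by
    filter_upwards [self_mem_nhdsWithin] with d hd using ne_of_gt hd
  refine HasDerivAt.lhopital_zero_nhdsGT
    (f' := fun d => deriv φ (x + d) - deriv φ (x - d)) (g' := fun d => 2 * d) ?_ ?_ ?_ ?_ ?_ ?_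
  · filter_upwards [(tendsto_const_add_nhdsGT_zero x).eventually hφ,
      (tendsto_const_sub_nhdsGT_zero x).eventually hφ] with d h₁ h₂
    simpa [sub_eq_add_neg] using ((h₁.hasDerivAt.comp_const_add x d).add
      (h₂.hasDerivAt.comp_const_sub x d)).sub_const (2 * φ x)
  · exact .of_forall fun d => by simpa using hasDerivAt_pow 2 d
  · filter_upwards [hpos] with d hd using mul_ne_zero two_ne_zero hd
  · have hcont := hφ.self_of_nhds.continuousAt.tendsto
    have h := ((hcont.comp (tendsto_const_add_nhdsGT_zero x)).add
      (hcont.comp (tendsto_const_sub_nhdsGT_zero x))).sub_const (2 * φ x)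
    rwa [show φ x + φ x - 2 * φ x = 0 by ring] at h
  · exact ((continuous_pow 2).tendsto' (0 : ℝ) 0 (by simp)).mono_left nhdsWithin_le_nhds
  · have hderiv : HasDerivAt (fun d => deriv φ (x + d) - deriv φ (x - d))
        (2 * deriv (deriv φ) x) 0 := by
      have h₁ : HasDerivAt (fun d => deriv φ (x + d)) (deriv (deriv φ) x) 0 :=
        .comp_const_add x 0 ((add_zero x).symm ▸ hφ'.hasDerivAt)
      have h₂ : HasDerivAt (fun d => deriv φ (x - d)) (-deriv (deriv φ) x) 0 :=
        .comp_const_sub x 0 ((sub_zero x).symm ▸ hφ'.hasDerivAt)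
      exact (h₁.sub h₂).congr_deriv (by ring)
    have h := (hderiv.tendsto_slope.mono_left (nhdsGT_le_nhdsNE 0)).div_const 2
    rw [mul_div_cancel_left₀ _ two_ne_zero] at h
    refine h.congr' ?_
    filter_upwards [hpos] with d hd
    simp only [slope_def_field, sub_zero, add_zero, sub_self]
    field_simp

theorem nonpos_of_hasDerivAt_of_isLocalMinOn_Iio {φ : ℝ → ℝ} {φ' t : ℝ}
    (hφ : HasDerivAt φ φ' t) (hmin : IsLocalMinOn φ (Iio t) t) : φ' ≤ 0 := by
  refine le_of_tendsto (hφ.tendsto_slope.mono_left (nhdsLT_le_nhdsNE t)) ?_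
  filter_upwards [hmin, self_mem_nhdsWithin] with s hs hst
  rw [slope_def_field]
  exact div_nonpos_of_nonneg_of_nonpos (sub_nonneg.2 hs) (sub_nonpos.2 (le_of_lt hst))

theorem le_of_hasDerivAt_lt_of_eq {a b : ℝ} {u u' v v' : ℝ → ℝ}
    (hu : ∀ t ∈ Icc a b, HasDerivAt u (u' t) t) (hv : ∀ t ∈ Icc a b, HasDerivAt v (v' t) t)
    (hab : u a ≤ v a) (h : ∀ t ∈ Icc a b, u t = v t → u' t < v' t) :
    ∀ t ∈ Icc a b, u t ≤ v t :=
  image_le_of_deriv_right_lt_deriv_boundary' (HasDerivAt.continuousOn hu)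
    (fun t ht => (hu t (Ico_subset_Icc_self ht)).hasDerivWithinAt) hab (HasDerivAt.continuousOn hv)
    (fun t ht => (hv t (Ico_subset_Icc_self ht)).hasDerivWithinAt)
    (fun t ht => h t (Ico_subset_Icc_self ht))

theorem continuousOn_uncurry_of_antitoneOn {α β : Type*} [TopologicalSpace α]
    [TopologicalSpace β] [LinearOrder β] [OrderTopology β] {F : ℝ → α → β} {s : Set ℝ} {J : Set α}
    (hs : IsOpen s) (hx : ∀ t ∈ J, ContinuousOn (F · t) s) (ht : ∀ x ∈ s, ContinuousOn (F x) J)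
    (hanti : ∀ t ∈ J, AntitoneOn (F · t) s) :
    ContinuousOn (fun q : ℝ × α => F q.1 q.2) (s ×ˢ J) := by
  rintro ⟨x, t⟩ ⟨hxs : x ∈ s, htJ : t ∈ J⟩
  have hxt : Tendsto (F · t) (𝓝 x) (𝓝 (F x t)) := (hx t htJ).continuousAt (hs.mem_nhds hxs)
  have hsx : ∀ᶠ y in 𝓝 x, y ∈ s := hs.mem_nhds hxs
  rw [ContinuousWithinAt, nhdsWithin_prod_eq, tendsto_order]
  constructor
  · intro l hl
    have hnear : ∀ᶠ y in 𝓝[>] x, l < F y t ∧ y ∈ s :=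
      ((hxt.eventually_const_lt hl).and hsx).filter_mono nhdsWithin_le_nhds
    obtain ⟨y, ⟨hly, hys⟩, hxy : x < y⟩ := (hnear.and eventually_mem_nhdsWithin).exists
    filter_upwards [(((eventually_lt_nhds hxy).and hsx).filter_mono nhdsWithin_le_nhds).prod_mk
      ((((ht y hys) t htJ).eventually_const_lt hly).and self_mem_nhdsWithin)]
      with q ⟨⟨hqy, hqs⟩, hlq, hqJ⟩
    exact hlq.trans_le (hanti _ hqJ hqs hys hqy.le)
  · intro r hr
    have hnear : ∀ᶠ y in 𝓝[<] x, F y t < r ∧ y ∈ s :=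
      ((hxt.eventually_lt_const hr).and hsx).filter_mono nhdsWithin_le_nhds
    obtain ⟨y, ⟨hry, hys⟩, hyx : y < x⟩ := (hnear.and eventually_mem_nhdsWithin).exists
    filter_upwards [(((eventually_gt_nhds hyx).and hsx).filter_mono nhdsWithin_le_nhds).prod_mk
      ((((ht y hys) t htJ).eventually_lt_const hry).and self_mem_nhdsWithin)]
      with q ⟨⟨hyq, hqs⟩, hqr, hqJ⟩
    exact (hanti _ hqJ hys hqs hyq.le).trans_lt hqr

theorem exists_first_zero_of_isCompact {α : Type*} [TopologicalSpace α] [T2Space α] {S : Set α}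
    (hS : IsCompact S) {δ : ℝ} {D : α → ℝ → ℝ}
    (hD : ContinuousOn (fun q : α × ℝ => D q.1 q.2) (S ×ˢ Icc 0 δ))
    (h₀ : ∀ z ∈ S, 0 < D z 0) (hδ : ∃ θ ∈ Icc 0 δ, ∃ z ∈ S, D z θ ≤ 0) :
    ∃ θ ∈ Ioc 0 δ, (∀ z ∈ S, 0 ≤ D z θ) ∧ ∃ z ∈ S, D z θ = 0 := by
  have hcl : IsCompact (S ×ˢ Icc 0 δ ∩ (fun q => D q.1 q.2) ⁻¹' Iic 0) :=
    (hS.prod isCompact_Icc).of_isClosed_subset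
      (hD.preimage_isClosed_of_isClosed (hS.prod isCompact_Icc).isClosed isClosed_Iic)
      inter_subset_left
  obtain ⟨θ', hθ', z', hz', hD'⟩ := hδ
  obtain ⟨⟨z, θ⟩, ⟨⟨hz, hθ⟩, hDz : D z θ ≤ 0⟩, hmin⟩ :=
    hcl.exists_isMinOn ⟨(z', θ'), ⟨hz', hθ'⟩, hD'⟩ continuousOn_snd
  have hθ0 : 0 < θ := hθ.1.lt_of_ne fun h => (h₀ z hz).not_ge (h ▸ hDz)
  have hnonneg : ∀ y ∈ S, 0 ≤ D y θ := by
    intro y hy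
    have hcont : ContinuousOn (D y) (Icc 0 δ) :=
      hD.comp (f := fun s => (y, s)) (by fun_prop) fun s hs => ⟨hy, hs⟩
    have hlt : ∀ s ∈ Ico 0 θ, 0 ≤ D y s := fun s hs => by
      by_contra! hneg
      exact hs.2.not_ge (hmin (a := (y, s)) ⟨⟨hy, hs.1, hs.2.le.trans hθ.2⟩, hneg.le⟩)
    refine continuousWithinAt_const.closure_le (s := Ico 0 θ) ?_
      ((hcont θ hθ).mono fun s hs => ⟨hs.1, hs.2.le.trans hθ.2⟩) hlt
    rw [closure_Ico hθ0.ne]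
    exact right_mem_Icc.2 hθ0.le
  exact ⟨θ, ⟨hθ0, hθ.2⟩, hnonneg, z, hz, hDz.antisymm (hnonneg z hz)⟩

theorem abs_sub_sub_deriv_mul_le {φ : ℝ → ℝ} {s : Set ℝ} {L : ℝ≥0} (hs : Convex ℝ s)
    (hφ : ∀ v ∈ s, DifferentiableAt ℝ φ v) (hL : LipschitzOnWith L (deriv φ) s) {v w : ℝ}
    (hv : v ∈ s) (hw : w ∈ s) : |φ v - φ w - deriv φ w * (v - w)| ≤ L * (v - w) ^ 2 := by
  have hsub : segment ℝ w v ⊆ s := hs.segment_subset hw hv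
  have hψ : ∀ y ∈ segment ℝ w v, HasDerivWithinAt (fun y => φ y - deriv φ w * y)
      (deriv φ y - deriv φ w) (segment ℝ w v) y := fun y hy => by
    simpa only [mul_one] using ((hφ y (hsub hy)).hasDerivAt.fun_sub
      ((hasDerivAt_id' y).const_mul (deriv φ w))).hasDerivWithinAt
  have hbound : ∀ y ∈ segment ℝ w v, ‖deriv φ y - deriv φ w‖ ≤ L * |v - w| := fun y hy => by
    refine (hL.dist_le_mul y (hsub hy) w hw).trans ?_
    gcongr
    rw [segment_eq_uIcc] at hy
    exact abs_sub_left_of_mem_uIcc hy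
  have h := (convex_segment w v).norm_image_sub_le_of_norm_hasDerivWithin_le hψ hbound
    (left_mem_segment ℝ w v) (right_mem_segment ℝ w v)
  calc |φ v - φ w - deriv φ w * (v - w)|
      = ‖φ v - deriv φ w * v - (φ w - deriv φ w * w)‖ := by rw [Real.norm_eq_abs]; ring_nf
    _ ≤ L * |v - w| * |v - w| := h
    _ = L * (v - w) ^ 2 := by rw [mul_assoc, abs_mul_abs_self, sq]

theorem abs_deriv_le_of_lipschitzOnWith_deriv {φ : ℝ → ℝ} {a b M : ℝ} {L : ℝ≥0} (hab : a < b)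
    (hφ : ∀ v ∈ Icc a b, DifferentiableAt ℝ φ v) (hL : LipschitzOnWith L (deriv φ) (Icc a b))
    (hM : ∀ v ∈ Icc a b, |φ v| ≤ M) {w : ℝ} (hw : w ∈ Icc a b) :
    |deriv φ w| ≤ 2 * M / (b - a) + L * (b - a) := by
  obtain ⟨ξ, hξ, hslope⟩ := exists_deriv_eq_slope φ hab
    (fun v hv => (hφ v hv).continuousAt.continuousWithinAt)
    fun v hv => (hφ v (Ioo_subset_Icc_self hv)).differentiableWithinAt
  have hξ' : ξ ∈ Icc a b := Ioo_subset_Icc_self hξ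
  have hmean : |deriv φ ξ| ≤ 2 * M / (b - a) := by
    rw [hslope, abs_div, abs_of_pos (sub_pos.2 hab)]
    gcongr
    linarith [abs_sub (φ b) (φ a), hM b (right_mem_Icc.2 hab.le), hM a (left_mem_Icc.2 hab.le)]
  have hosc : |deriv φ w - deriv φ ξ| ≤ L * (b - a) :=
    (hL.dist_le_mul w hw ξ hξ').trans (by gcongr; exact Real.dist_le_of_mem_Icc hw hξ')
  linarith [abs_sub_abs_le_abs_sub (deriv φ w) (deriv φ ξ)]

/-- `f(t, ·)` is of class `C^{1,1}` on the interval `s`, uniformly in `t ∈ J`: `Λ` bounds `∂ᵤf` and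
`L` is a Lipschitz constant of `∂ᵤf` in `u`. These constants control the first and second order
dependence of the solutions of `h' = f(t, h)` on their initial values. -/
structure IsC11On (f : ℝ → ℝ → ℝ) (J s : Set ℝ) (Λ L : ℝ≥0) : Prop where
  convex : Convex ℝ s
  differentiableAt : ∀ t ∈ J, ∀ v ∈ s, DifferentiableAt ℝ (f t) v
  abs_deriv_le : ∀ t ∈ J, ∀ v ∈ s, |deriv (f t) v| ≤ Λ
  lipschitzOnWith_deriv : ∀ t ∈ J, LipschitzOnWith L (deriv (f t)) s

namespace IsC11On

variable {f : ℝ → ℝ → ℝ} {J s : Set ℝ} {Λ L : ℝ≥0} {t : ℝ}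

theorem lipschitzOnWith (hf : IsC11On f J s Λ L) (ht : t ∈ J) : LipschitzOnWith Λ (f t) s :=
  hf.convex.lipschitzOnWith_of_nnnorm_deriv_le (hf.differentiableAt t ht) (hf.abs_deriv_le t ht)

theorem second_difference_ge (hf : IsC11On f J s Λ L) (ht : t ∈ J) {a b c η : ℝ} (ha : a ∈ s)
    (hb : b ∈ s) (hc : c ∈ s) (hab : |b - a| ≤ η) (hac : |c - a| ≤ η)
    (hconv : 0 ≤ b + c - 2 * a) :
    -Λ * (b + c - 2 * a) - 2 * L * η ^ 2 ≤ f t b + f t c - 2 * f t a := by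
  have taylor : ∀ v ∈ s, |v - a| ≤ η →
      deriv (f t) a * (v - a) - L * η ^ 2 ≤ f t v - f t a := by
    intro v hv hva
    have hrem := (abs_le.1 (abs_sub_sub_deriv_mul_le hf.convex (hf.differentiableAt t ht)
      (hf.lipschitzOnWith_deriv t ht) hv ha)).1
    have hsq : L * (v - a) ^ 2 ≤ L * η ^ 2 :=
      mul_le_mul_of_nonneg_left (sq_le_sq.2 (hva.trans (le_abs_self η))) L.coe_nonneg
    linarith
  have hlin : -Λ * (b + c - 2 * a) ≤ deriv (f t) a * (b + c - 2 * a) :=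
    mul_le_mul_of_nonneg_right (abs_le.1 (hf.abs_deriv_le t ht a ha)).1 hconv
  linarith [taylor b hb hab, taylor c hc hac]

end IsC11On

theorem exists_isC11On_Icc {f : ℝ → ℝ → ℝ} {J : Set ℝ} {K : ℝ} {L : ℝ≥0} (hJ : IsCompact J)
    (hK : 0 < K) (hf : ContinuousOn (fun q : ℝ × ℝ => f q.1 q.2) (J ×ˢ Icc 0 K))
    (hdiff : ∀ t ∈ J, ∀ v ∈ Icc 0 K, DifferentiableAt ℝ (f t) v)
    (hL : ∀ t ∈ J, LipschitzOnWith L (deriv (f t)) (Icc 0 K)) :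
    ∃ Λ : ℝ≥0, IsC11On f J (Icc 0 K) Λ L := by
  obtain ⟨M, hM⟩ := (hJ.prod isCompact_Icc).exists_bound_of_continuousOn hf
  refine ⟨(2 * M / (K - 0) + L * (K - 0)).toNNReal, convex_Icc 0 K, hdiff, ?_, hL⟩
  exact fun t ht v hv => (abs_deriv_le_of_lipschitzOnWith_deriv hK (hdiff t ht) (hL t ht)
    (fun w hw => hM (t, w) ⟨ht, hw⟩) hv).trans (Real.le_coe_toNNReal _)

theorem hasDerivAt_const_mul_exp_const_mul (c κ t : ℝ) :
    HasDerivAt (fun t => c * Real.exp (κ * t)) (κ * (c * Real.exp (κ * t))) t :=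
  (((hasDerivAt_id t).const_mul κ).exp.const_mul c).congr_deriv (by simp; ring)

namespace ODESolOn

variable {f : ℝ → ℝ → ℝ} {T c : ℝ} {s : Set ℝ} {Λ L : ℝ≥0} {φ g : ℝ → ℝ}

-- Unlike Grönwall's inequality, comparison with `φ + c e^{∓(Λ+1)t}` needs `g ∈ s` only at the times
-- of contact, so it also shows that `g` stays in `s`.
theorem add_mul_exp_neg_le (hf : ∀ t ∈ Icc 0 T, LipschitzOnWith Λ (f t) s)
    (hφ : ODESolOn f φ (Icc 0 T)) (hg : ODESolOn f g (Icc 0 T)) (hφs : ∀ t ∈ Icc 0 T, φ t ∈ s)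
    (hc : 0 < c) (h₀ : φ 0 + c ≤ g 0)
    (hs : ∀ t ∈ Icc 0 T, φ t + c * Real.exp (-(Λ + 1) * t) = g t → g t ∈ s) :
    ∀ t ∈ Icc 0 T, φ t + c * Real.exp (-(Λ + 1) * t) ≤ g t := by
  refine le_of_hasDerivAt_lt_of_eq
    (fun t ht => (hφ t ht).add (hasDerivAt_const_mul_exp_const_mul c (-(Λ + 1)) t)) hg
    (by simpa using h₀) fun t ht heq => ?_
  have hgap : 0 < c * Real.exp (-(Λ + 1) * t) := by positivity
  have hlip := (hf t ht).dist_le_mul (φ t) (hφs t ht) (g t) (hs t ht heq)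
  rw [Real.dist_eq, Real.dist_eq, ← heq, sub_add_cancel_left, abs_neg, abs_of_pos hgap, heq] at hlip
  linarith [(abs_le.1 hlip).2]

theorem le_add_mul_exp (hf : ∀ t ∈ Icc 0 T, LipschitzOnWith Λ (f t) s)
    (hφ : ODESolOn f φ (Icc 0 T)) (hg : ODESolOn f g (Icc 0 T)) (hφs : ∀ t ∈ Icc 0 T, φ t ∈ s)
    (hc : 0 < c) (h₀ : g 0 ≤ φ 0 + c)
    (hs : ∀ t ∈ Icc 0 T, g t = φ t + c * Real.exp ((Λ + 1) * t) → g t ∈ s) :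
    ∀ t ∈ Icc 0 T, g t ≤ φ t + c * Real.exp ((Λ + 1) * t) := by
  refine le_of_hasDerivAt_lt_of_eq hg
    (fun t ht => (hφ t ht).add (hasDerivAt_const_mul_exp_const_mul c (Λ + 1) t))
    (by simpa using h₀) fun t ht heq => ?_
  have hgap : 0 < c * Real.exp ((Λ + 1) * t) := by positivity
  have hlip := (hf t ht).dist_le_mul (g t) (hs t ht heq) (φ t) (hφs t ht)
  rw [Real.dist_eq, Real.dist_eq, heq, add_sub_cancel_left, abs_of_pos hgap, ← heq] at hlip
  linarith [(abs_le.1 hlip).2]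

theorem mem_Icc_of_tube (hf : ∀ t ∈ Icc 0 T, LipschitzOnWith Λ (f t) s)
    (hφ : ODESolOn f φ (Icc 0 T)) (hg : ODESolOn f g (Icc 0 T)) (h₀ : φ 0 < g 0)
    (htube : ∀ t ∈ Icc 0 T,
      Icc (φ t) (φ t + (g 0 - φ 0) * Real.exp ((Λ + 1) * T)) ⊆ s) :
    ∀ t ∈ Icc 0 T, g t ∈ Icc (φ t) (φ t + (g 0 - φ 0) * Real.exp ((Λ + 1) * T)) := by
  have hc : 0 < g 0 - φ 0 := sub_pos.2 h₀
  have hmem : ∀ t ∈ Icc 0 T, ∀ κ ≤ (Λ + 1 : ℝ) * T, φ t + (g 0 - φ 0) * Real.exp κ ∈ s :=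
    fun t ht κ hκ => htube t ht ⟨le_add_of_nonneg_right (by positivity), by gcongr⟩
  have hφs : ∀ t ∈ Icc 0 T, φ t ∈ s := fun t ht =>
    htube t ht (left_mem_Icc.2 (le_add_of_nonneg_right (by positivity)))
  have hle : ∀ t ∈ Icc 0 T, (Λ + 1 : ℝ) * t ≤ (Λ + 1) * T := fun t ht => by gcongr; exact ht.2
  have hneg : ∀ t ∈ Icc 0 T, -(Λ + 1 : ℝ) * t ≤ (Λ + 1) * T := fun t ht =>
    (hle t ht).trans' (by nlinarith [ht.1, Λ.coe_nonneg])
  intro t ht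
  constructor
  · exact (le_add_of_nonneg_right (by positivity)).trans (add_mul_exp_neg_le hf hφ hg hφs hc
      (by linarith) (fun r hr heq => heq ▸ hmem r hr _ (hneg r hr)) t ht)
  · refine (le_add_mul_exp hf hφ hg hφs hc (by linarith)
      (fun r hr heq => heq ▸ hmem r hr _ (hle r hr)) t ht).trans ?_
    gcongr
    exact ht.2

theorem le_of_initial_lt (hf : ∀ t ∈ Icc 0 T, LipschitzOnWith Λ (f t) s)
    (hφ : ODESolOn f φ (Icc 0 T)) (hg : ODESolOn f g (Icc 0 T)) (hφs : ∀ t ∈ Icc 0 T, φ t ∈ s)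
    (hgs : ∀ t ∈ Icc 0 T, g t ∈ s) (h₀ : φ 0 < g 0) : ∀ t ∈ Icc 0 T, φ t ≤ g t := fun t ht =>
  (le_add_of_nonneg_right (by have := sub_pos.2 h₀; positivity)).trans
    (add_mul_exp_neg_le hf hφ hg hφs (sub_pos.2 h₀) (by linarith) (fun r hr _ => hgs r hr) t ht)

theorem dist_le_of_mem (hf : ∀ t ∈ Icc 0 T, LipschitzOnWith Λ (f t) s)
    (hφ : ODESolOn f φ (Icc 0 T)) (hg : ODESolOn f g (Icc 0 T)) (hφs : ∀ t ∈ Icc 0 T, φ t ∈ s)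
    (hgs : ∀ t ∈ Icc 0 T, g t ∈ s) :
    ∀ t ∈ Icc 0 T, dist (φ t) (g t) ≤ dist (φ 0) (g 0) * Real.exp (Λ * t) := by
  have hIco {t : ℝ} (ht : t ∈ Ico 0 T) : t ∈ Icc 0 T := Ico_subset_Icc_self ht
  simpa using dist_le_of_trajectories_ODE_of_mem (s := fun _ => s) (fun t ht => hf t (hIco ht))
    (HasDerivAt.continuousOn hφ) (fun t ht => (hφ t (hIco ht)).hasDerivWithinAt)
    (fun t ht => hφs t (hIco ht)) (HasDerivAt.continuousOn hg)
    (fun t ht => (hg t (hIco ht)).hasDerivWithinAt) (fun t ht => hgs t (hIco ht)) le_rfl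

theorem second_difference_ge (hf : IsC11On f (Icc 0 T) s Λ L) {g₁ g₂ : ℝ → ℝ}
    (hg : ODESolOn f g (Icc 0 T)) (hg₁ : ODESolOn f g₁ (Icc 0 T)) (hg₂ : ODESolOn f g₂ (Icc 0 T))
    (hgs : ∀ t ∈ Icc 0 T, g t ∈ s) (hgs₁ : ∀ t ∈ Icc 0 T, g₁ t ∈ s)
    (hgs₂ : ∀ t ∈ Icc 0 T, g₂ t ∈ s) {η σ : ℝ} (hη₁ : ∀ t ∈ Icc 0 T, |g₁ t - g t| ≤ η)
    (hη₂ : ∀ t ∈ Icc 0 T, |g₂ t - g t| ≤ η) (hσ : 0 < σ) (h₀ : σ ≤ g₁ 0 + g₂ 0 - 2 * g 0)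
    (hsmall : 2 * L * η ^ 2 < σ * Real.exp (-(Λ + 1) * T)) :
    ∀ t ∈ Icc 0 T, σ * Real.exp (-(Λ + 1) * T) ≤ g₁ t + g₂ t - 2 * g t := by
  have hexp : ∀ t ∈ Icc 0 T,
      σ * Real.exp (-(Λ + 1) * T) ≤ σ * Real.exp (-(Λ + 1) * t) := fun t ht => by
    rw [neg_mul, neg_mul]
    gcongr
    exact ht.2
  intro t ht
  refine (hexp t ht).trans (le_of_hasDerivAt_lt_of_eq
    (fun t _ => hasDerivAt_const_mul_exp_const_mul σ (-(Λ + 1)) t)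
    (fun t ht => ((hg₁ t ht).add (hg₂ t ht)).sub ((hg t ht).const_mul 2))
    (by simpa using h₀) (fun t ht heq => ?_) t ht)
  have heq' : σ * Real.exp (-(Λ + 1) * t) = g₁ t + g₂ t - 2 * g t := heq
  have hrhs := hf.second_difference_ge ht (hgs t ht) (hgs₁ t ht) (hgs₂ t ht) (hη₁ t ht) (hη₂ t ht)
    (heq' ▸ by positivity)
  rw [← heq'] at hrhs
  linarith [hexp t ht]

end ODESolOn

/-- `h a`, for `a ∈ A`, is the solution `h(·; a)` of `h' = f(t, h)` with `h(0) = a` on `[0, T]`,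
and it stays in `s`, the set of values on which `f` is controlled. -/
structure IsFlow (f : ℝ → ℝ → ℝ) (T : ℝ) (s A : Set ℝ) (h : ℝ → ℝ → ℝ) : Prop where
  odeSolOn : ∀ a ∈ A, ODESolOn f (h a) (Icc 0 T)
  initial : ∀ a ∈ A, h a 0 = a
  mem : ∀ a ∈ A, ∀ t ∈ Icc 0 T, h a t ∈ s

namespace IsFlow

variable {f : ℝ → ℝ → ℝ} {T : ℝ} {s A : Set ℝ} {Λ L : ℝ≥0} {h : ℝ → ℝ → ℝ} {a b c t : ℝ}

theorem abs_sub_le (hh : IsFlow f T s A h) (hf : ∀ t ∈ Icc 0 T, LipschitzOnWith Λ (f t) s)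
    (ha : a ∈ A) (hb : b ∈ A) (ht : t ∈ Icc 0 T) :
    |h a t - h b t| ≤ |a - b| * Real.exp (Λ * T) := by
  have hdist := ODESolOn.dist_le_of_mem hf (hh.odeSolOn a ha) (hh.odeSolOn b hb) (hh.mem a ha)
    (hh.mem b hb) t ht
  rw [hh.initial a ha, hh.initial b hb] at hdist
  refine hdist.trans ?_
  rw [Real.dist_eq]
  gcongr
  exact ht.2

theorem monotoneOn (hh : IsFlow f T s A h) (hf : ∀ t ∈ Icc 0 T, LipschitzOnWith Λ (f t) s)
    (ht : t ∈ Icc 0 T) : MonotoneOn (h · t) A := by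
  intro a ha b hb hab
  rcases hab.eq_or_lt with rfl | hab
  · exact le_rfl
  · exact ODESolOn.le_of_initial_lt hf (hh.odeSolOn a ha) (hh.odeSolOn b hb) (hh.mem a ha)
      (hh.mem b hb) (by rwa [hh.initial a ha, hh.initial b hb]) t ht

theorem continuousOn (hh : IsFlow f T s A h) (hf : ∀ t ∈ Icc 0 T, LipschitzOnWith Λ (f t) s) :
    ContinuousOn (fun q : ℝ × ℝ => h q.1 q.2) (A ×ˢ Icc 0 T) :=
  continuousOn_prod_of_continuousOn_lipschitzOnWith _ (Real.exp (Λ * T)).toNNReal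
    (fun a ha => HasDerivAt.continuousOn (hh.odeSolOn a ha))
    fun t ht => LipschitzOnWith.of_dist_le_mul fun a ha b hb => by
      rw [Real.coe_toNNReal _ (Real.exp_pos _).le, mul_comm]
      exact hh.abs_sub_le hf ha hb ht

theorem second_difference_ge (hh : IsFlow f T s A h) (hf : IsC11On f (Icc 0 T) s Λ L)
    (ha : a ∈ A) (hb : b ∈ A) (hc : c ∈ A) {η σ : ℝ} (hab : |b - a| ≤ η) (hac : |c - a| ≤ η)
    (hσ : 0 < σ) (hconv : σ ≤ b + c - 2 * a)
    (hsmall : 2 * L * (η * Real.exp (Λ * T)) ^ 2 < σ * Real.exp (-(Λ + 1) * T))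
    (ht : t ∈ Icc 0 T) :
    σ * Real.exp (-(Λ + 1) * T) ≤ h b t + h c t - 2 * h a t := by
  have hlip : ∀ r ∈ Icc 0 T, LipschitzOnWith Λ (f r) s := fun r hr => hf.lipschitzOnWith hr
  have hdist : ∀ v ∈ A, |v - a| ≤ η → ∀ r ∈ Icc 0 T, |h v r - h a r| ≤ η * Real.exp (Λ * T) :=
    fun v hv hva r hr => (hh.abs_sub_le hlip hv ha hr).trans (by gcongr)
  exact ODESolOn.second_difference_ge hf (hh.odeSolOn a ha) (hh.odeSolOn b hb) (hh.odeSolOn c hc)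
    (hh.mem a ha) (hh.mem b hb) (hh.mem c hc) (hdist b hb hab) (hdist c hc hac) hσ
    (by rwa [hh.initial a ha, hh.initial b hb, hh.initial c hc]) hsmall t ht

end IsFlow

theorem exists_isFlow {f : ℝ → ℝ → ℝ} {T δ : ℝ} {s : Set ℝ} {Λ : ℝ≥0} {p : ℝ → ℝ} (hδ : 0 ≤ δ)
    (hf : ∀ t ∈ Icc 0 T, LipschitzOnWith Λ (f t) s) (hp : ODESolOn f p (Icc 0 T))
    (htube : ∀ t ∈ Icc 0 T, Icc (p t) (p t + δ * Real.exp ((Λ + 1) * T)) ⊆ s)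
    (hsol : ∀ a ∈ Ioc (p 0) (p 0 + δ), ∃ g, ODESolOn f g (Icc 0 T) ∧ g 0 = a ∧ a ≤ g T) :
    ∃ h, IsFlow f T s (Icc (p 0) (p 0 + δ)) h ∧ h (p 0) = p ∧
      ∀ a ∈ Ioc (p 0) (p 0 + δ), a ≤ h a T := by
  choose! g hg hg₀ hgT using hsol
  have hmem : ∀ a ∈ Ioc (p 0) (p 0 + δ), ∀ t ∈ Icc 0 T, g a t ∈ s := by
    intro a ha t ht
    have hsub : ∀ r ∈ Icc 0 T,
        Icc (p r) (p r + (g a 0 - p 0) * Real.exp ((Λ + 1) * T)) ⊆ s := fun r hr =>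
      (Icc_subset_Icc_right (by rw [hg₀ a ha]; gcongr; linarith [ha.2])).trans (htube r hr)
    exact hsub t ht (ODESolOn.mem_Icc_of_tube hf hp (hg a ha) (by rw [hg₀ a ha]; exact ha.1) hsub
      t ht)
  have hne {a : ℝ} (ha : a ∈ Icc (p 0) (p 0 + δ)) (hap : a ≠ p 0) : a ∈ Ioc (p 0) (p 0 + δ) :=
    ⟨ha.1.lt_of_ne' hap, ha.2⟩
  refine ⟨Function.update g (p 0) p, ⟨?_, ?_, ?_⟩, Function.update_self .., ?_⟩
  · intro a ha
    rcases eq_or_ne a (p 0) with rfl | hap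
    · rwa [Function.update_self]
    · rw [Function.update_of_ne hap]
      exact hg a (hne ha hap)
  · intro a ha
    rcases eq_or_ne a (p 0) with rfl | hap
    · rw [Function.update_self]
    · rw [Function.update_of_ne hap, hg₀ a (hne ha hap)]
  · intro a ha t ht
    rcases eq_or_ne a (p 0) with rfl | hap
    · rw [Function.update_self]
      exact htube t ht (left_mem_Icc.2 (le_add_of_nonneg_right (by positivity)))
    · rw [Function.update_of_ne hap]
      exact hmem a (hne ha hap) t ht
  · intro a ha
    rw [Function.update_of_ne ha.1.ne']
    exact hgT a ha

theorem SatPDE.ne_of_second_difference_ge {f U w : ℝ → ℝ → ℝ} {sx st : Set ℝ} {x t c : ℝ}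
    (hU : SatPDE f U sx st) (hx : sx ∈ 𝓝 x) (ht : t ∈ st)
    (hw : HasDerivAt (w x) (f t (w x t)) t) (htime : ∀ᶠ τ in 𝓝[<] t, w x τ ≤ U x τ)
    (hspace : ∀ᶠ y in 𝓝 x, w y t ≤ U y t) (hc : 0 < c)
    (hconv : ∀ᶠ d in 𝓝[>] 0, c * d ^ 2 ≤ w (x + d) t + w (x - d) t - 2 * w x t) :
    w x t ≠ U x t := by
  intro heq
  obtain ⟨-, hU'', hUt⟩ := hU x (mem_of_mem_nhds hx) t ht
  have hUxx : c ≤ deriv (deriv fun y => U y t) x := by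
    refine ge_of_tendsto (tendsto_symm_second_difference_div_sq
      (mem_of_superset hx fun y hy => (hU y hy t ht).1) hU'') ?_
    filter_upwards [hconv, (tendsto_const_add_nhdsGT_zero x).eventually hspace,
      (tendsto_const_sub_nhdsGT_zero x).eventually hspace, self_mem_nhdsWithin]
      with d hd hd₁ hd₂ hdpos
    rw [le_div_iff₀ (pow_pos hdpos 2)]
    linarith
  have hmin : IsLocalMinOn (fun τ => U x τ - w x τ) (Iio t) t := by
    filter_upwards [htime] with τ hτ
    rw [heq, sub_self]
    exact sub_nonneg.2 hτ
  have := nonpos_of_hasDerivAt_of_isLocalMinOn_Iio (hUt.sub hw) hmin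
  rw [heq] at this
  linarith

/-- The parabola with vertex `X + R` and value `1` at `X`; on `[X, X + R]` it is the convex spatial
profile of the barriers. -/
def parabola (X R x : ℝ) : ℝ := (1 - (x - X) / R) ^ 2

section Parabola

variable {X R x y : ℝ}

theorem abs_one_sub_sub_div_le_one (hR : 0 < R) (hx : x ∈ Icc X (X + R)) :
    |1 - (x - X) / R| ≤ 1 := by
  have h₀ : 0 ≤ (x - X) / R := div_nonneg (sub_nonneg.2 hx.1) hR.le
  have h₁ : (x - X) / R ≤ 1 := (div_le_one hR).2 (by linarith [hx.2])
  rw [abs_of_nonneg (sub_nonneg.2 h₁)]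
  linarith

theorem parabola_mem_Icc (hR : 0 < R) (hx : x ∈ Icc X (X + R)) : parabola X R x ∈ Icc 0 1 :=
  ⟨sq_nonneg _, (sq_le_one_iff_abs_le_one _).2 (abs_one_sub_sub_div_le_one hR hx)⟩

theorem abs_parabola_sub_parabola_le (hR : 0 < R) (hx : x ∈ Icc X (X + R))
    (hy : y ∈ Icc X (X + R)) : |parabola X R y - parabola X R x| ≤ 2 / R * |y - x| := by
  have hsum : |1 - (y - X) / R + (1 - (x - X) / R)| ≤ 2 :=
    (abs_add_le _ _).trans (by
      linarith [abs_one_sub_sub_div_le_one hR hx, abs_one_sub_sub_div_le_one hR hy])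
  have hdiff : |1 - (y - X) / R - (1 - (x - X) / R)| = |y - x| / R := by
    rw [show 1 - (y - X) / R - (1 - (x - X) / R) = -((y - x) / R) by ring, abs_neg, abs_div,
      abs_of_pos hR]
  calc |parabola X R y - parabola X R x|
      = |1 - (y - X) / R + (1 - (x - X) / R)| * |1 - (y - X) / R - (1 - (x - X) / R)| := by
        rw [parabola, parabola, sq_sub_sq, abs_mul]
    _ ≤ 2 * (|y - x| / R) := by rw [hdiff]; gcongr
    _ = 2 / R * |y - x| := by ring

theorem parabola_second_difference (X R x d : ℝ) :
    parabola X R (x + d) + parabola X R (x - d) - 2 * parabola X R x = 2 * (d / R) ^ 2 := by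
  simp only [parabola]
  ring

theorem parabola_self_add (hR : R ≠ 0) : parabola X R (X + R) = 0 := by
  simp [parabola, hR]

theorem continuous_parabola (X R : ℝ) : Continuous (parabola X R) := by
  unfold parabola
  fun_prop

theorem tendsto_parabola_atTop (X x : ℝ) : Tendsto (parabola X · x) atTop (𝓝 1) := by
  have h := ((tendsto_const_nhds (x := x - X)).div_atTop tendsto_id).const_sub 1 |>.pow 2
  simpa [parabola] using h

end Parabola

/-- The subsolution obtained by letting the data `a₀ + θ q(x)`, with `q` the parabola, evolve under
the flow `h` at each point `x` separately. -/
def barrier (h : ℝ → ℝ → ℝ) (a₀ X R θ x t : ℝ) : ℝ := h (a₀ + θ * parabola X R x) t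

section Barrier

variable {f : ℝ → ℝ → ℝ} {T δ : ℝ} {s : Set ℝ} {Λ L : ℝ≥0} {h : ℝ → ℝ → ℝ} {a₀ X R θ x t : ℝ}

theorem add_mul_parabola_mem_Icc (hR : 0 < R) (hθ : θ ∈ Icc 0 δ) (hx : x ∈ Icc X (X + R)) :
    a₀ + θ * parabola X R x ∈ Icc a₀ (a₀ + δ) := by
  have hq := parabola_mem_Icc hR hx
  exact ⟨le_add_of_nonneg_right (mul_nonneg hθ.1 hq.1),
    by gcongr; exact (mul_le_of_le_one_right hθ.1 hq.2).trans hθ.2⟩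

theorem continuousOn_barrier (hR : 0 < R) (hh : IsFlow f T s (Icc a₀ (a₀ + δ)) h)
    (hf : ∀ t ∈ Icc 0 T, LipschitzOnWith Λ (f t) s) :
    ContinuousOn (fun q : (ℝ × ℝ) × ℝ => barrier h a₀ X R q.2 q.1.1 q.1.2)
      ((Icc X (X + R) ×ˢ Icc 0 T) ×ˢ Icc 0 δ) := by
  have hq := continuous_parabola X R
  exact (hh.continuousOn hf).comp
    (f := fun q : (ℝ × ℝ) × ℝ => (a₀ + q.2 * parabola X R q.1.1, q.1.2)) (by fun_prop)
    fun q hq => ⟨add_mul_parabola_mem_Icc hR hq.2 hq.1.1, hq.1.2⟩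

theorem barrier_second_difference_ge (hR : 0 < R) (hh : IsFlow f T s (Icc a₀ (a₀ + δ)) h)
    (hf : IsC11On f (Icc 0 T) s Λ L)
    (hsmall : 4 * L * Real.exp (Λ * T) ^ 2 * δ < Real.exp (-(Λ + 1) * T)) (hθ : θ ∈ Ioc 0 δ)
    {d : ℝ} (hd : 0 < d) (hx : x ∈ Icc X (X + R)) (hxd : x + d ∈ Icc X (X + R))
    (hxd' : x - d ∈ Icc X (X + R)) (ht : t ∈ Icc 0 T) :
    2 * θ / R ^ 2 * Real.exp (-(Λ + 1) * T) * d ^ 2 ≤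
      barrier h a₀ X R θ (x + d) t + barrier h a₀ X R θ (x - d) t - 2 * barrier h a₀ X R θ x t := by
  have hθ' : θ ∈ Icc 0 δ := Ioc_subset_Icc_self hθ
  have hθ₀ : 0 < θ := hθ.1
  have hη : ∀ y ∈ Icc X (X + R), |y - x| = d →
      |a₀ + θ * parabola X R y - (a₀ + θ * parabola X R x)| ≤ 2 * θ * d / R := by
    intro y hy hyx
    rw [add_sub_add_left_eq_sub, ← mul_sub, abs_mul, abs_of_pos hθ₀]
    calc θ * |parabola X R y - parabola X R x| ≤ θ * (2 / R * |y - x|) := by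
          gcongr; exact abs_parabola_sub_parabola_le hR hx hy
      _ = 2 * θ * d / R := by rw [hyx]; ring
  have hconv := parabola_second_difference X R x d
  have hlt : 4 * L * Real.exp (Λ * T) ^ 2 * θ < Real.exp (-(Λ + 1) * T) :=
    hsmall.trans_le' (by gcongr; exact hθ.2)
  have hkey := hh.second_difference_ge hf (add_mul_parabola_mem_Icc hR hθ' hx)
    (add_mul_parabola_mem_Icc hR hθ' hxd) (add_mul_parabola_mem_Icc hR hθ' hxd')
    (hη _ hxd (by rw [add_sub_cancel_left, abs_of_pos hd]))
    (hη _ hxd' (by rw [sub_sub_cancel_left, abs_neg, abs_of_pos hd]))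
    (σ := 2 * θ * (d / R) ^ 2) (by positivity) (by linear_combination -θ * hconv) ?_ ht
  · exact hkey.trans_eq' (by ring)
  · calc 2 * L * (2 * θ * d / R * Real.exp (Λ * T)) ^ 2
        = 2 * θ * (d / R) ^ 2 * (4 * L * Real.exp (Λ * T) ^ 2 * θ) := by ring
      _ < _ := by gcongr

theorem barrier_ne_of_forall_le {U : ℝ → ℝ → ℝ} (hR : 0 < R)
    (hh : IsFlow f T s (Icc a₀ (a₀ + δ)) h) (hf : IsC11On f (Icc 0 T) s Λ L)
    (hsmall : 4 * L * Real.exp (Λ * T) ^ 2 * δ < Real.exp (-(Λ + 1) * T))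
    (hU : SatPDE f U (Ioo X (X + R)) (Icc 0 T)) (hθ : θ ∈ Ioc 0 δ)
    (hle : ∀ x ∈ Icc X (X + R), ∀ t ∈ Icc 0 T, barrier h a₀ X R θ x t ≤ U x t)
    (hx : x ∈ Ioo X (X + R)) (ht : t ∈ Ioc 0 T) : barrier h a₀ X R θ x t ≠ U x t := by
  have hθ₀ : 0 < θ := hθ.1
  have ht' : t ∈ Icc 0 T := Ioc_subset_Icc_self ht
  have hnear : ∀ᶠ y in 𝓝 x, y ∈ Icc X (X + R) := Icc_mem_nhds hx.1 hx.2
  refine hU.ne_of_second_difference_ge (c := 2 * θ / R ^ 2 * Real.exp (-(Λ + 1) * T))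
    (Ioo_mem_nhds hx.1 hx.2) ht' ?_ ?_ ?_ (by positivity) ?_
  · exact hh.odeSolOn _
      (add_mul_parabola_mem_Icc hR (Ioc_subset_Icc_self hθ) (Ioo_subset_Icc_self hx)) t ht'
  · filter_upwards [Ioo_mem_nhdsLT ht.1] with τ hτ
    exact hle x (Ioo_subset_Icc_self hx) τ ⟨hτ.1.le, hτ.2.le.trans ht.2⟩
  · filter_upwards [hnear] with y hy using hle y hy t ht'
  · filter_upwards [(tendsto_const_add_nhdsGT_zero x).eventually hnear,
      (tendsto_const_sub_nhdsGT_zero x).eventually hnear, self_mem_nhdsWithin] with d hxd hxd' hd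
    exact barrier_second_difference_ge hR hh hf hsmall hθ hd (Ioo_subset_Icc_self hx) hxd hxd' ht'

theorem barrier_lt {U : ℝ → ℝ → ℝ} (hT : 0 < T) (hR : 0 < R) (hδ : 0 ≤ δ)
    (hh : IsFlow f T s (Icc a₀ (a₀ + δ)) h) (hf : IsC11On f (Icc 0 T) s Λ L)
    (hsmall : 4 * L * Real.exp (Λ * T) ^ 2 * δ < Real.exp (-(Λ + 1) * T))
    (hhT : ∀ a ∈ Ioc a₀ (a₀ + δ), a ≤ h a T) (hU : SatPDE f U (Ioo X (X + R)) (Icc 0 T))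
    (hUcont : ContinuousOn (fun q : ℝ × ℝ => U q.1 q.2) (Icc X (X + R) ×ˢ Icc 0 T))
    (hUT : ∀ x ∈ Ioo X (X + R), U x T ≤ U x 0)
    (hbase : ∀ x ∈ Icc X (X + R), ∀ t ∈ Icc 0 T, h a₀ t < U x t)
    (hleft : ∀ t ∈ Icc 0 T, h (a₀ + δ) t < U X t) :
    ∀ x ∈ Icc X (X + R), ∀ t ∈ Icc 0 T, barrier h a₀ X R δ x t < U x t := by
  have hlip : ∀ t ∈ Icc 0 T, LipschitzOnWith Λ (f t) s := fun t ht => hf.lipschitzOnWith ht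
  have hmem {θ x : ℝ} (hθ : θ ∈ Ioc 0 δ) (hx : x ∈ Icc X (X + R)) :
      a₀ + θ * parabola X R x ∈ Icc a₀ (a₀ + δ) :=
    add_mul_parabola_mem_Icc hR (Ioc_subset_Icc_self hθ) hx
  by_contra! hcross
  obtain ⟨x', hx', t', ht', hge⟩ := hcross
  obtain ⟨θ, hθ, hnonneg, ⟨x, t⟩, ⟨hx : x ∈ Icc X (X + R), ht : t ∈ Icc 0 T⟩, hzero⟩ :=
    exists_first_zero_of_isCompact (isCompact_Icc.prod isCompact_Icc)
      (D := fun q θ => U q.1 q.2 - barrier h a₀ X R θ q.1 q.2)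
      ((hUcont.comp continuousOn_fst fun q hq => hq.1).sub (continuousOn_barrier hR hh hlip))
      (fun q hq => by simpa [barrier] using hbase q.1 hq.1 q.2 hq.2)
      ⟨δ, right_mem_Icc.2 hδ, (x', t'), ⟨hx', ht'⟩, sub_nonpos.2 hge⟩
  have hle : ∀ y ∈ Icc X (X + R), ∀ r ∈ Icc 0 T, barrier h a₀ X R θ y r ≤ U y r :=
    fun y hy r hr => sub_nonneg.1 (hnonneg (y, r) ⟨hy, hr⟩)
  have hcontact : U x t = barrier h a₀ X R θ x t := sub_eq_zero.1 hzero
  have hbase_ne : a₀ + θ * parabola X R x ≠ a₀ := fun heq =>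
    (hbase x hx t ht).ne (by rw [hcontact, barrier, heq])
  have hxX : x ≠ X := by
    rintro rfl
    refine (hleft t ht).not_ge (hcontact.trans_le ?_)
    exact hh.monotoneOn hlip ht (hmem hθ hx) (right_mem_Icc.2 (by linarith)) (hmem hθ hx).2
  have hxXR : x ≠ X + R := by
    rintro rfl
    exact hbase_ne (by rw [parabola_self_add hR.ne', mul_zero, add_zero])
  have hxI : x ∈ Ioo X (X + R) := ⟨hx.1.lt_of_ne' hxX, hx.2.lt_of_ne hxXR⟩
  have hne {r : ℝ} (hr : r ∈ Ioc 0 T) := barrier_ne_of_forall_le hR hh hf hsmall hU hθ hle hxI hr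
  rcases ht.1.eq_or_lt with rfl | htpos
  · refine hne (right_mem_Ioc.2 hT) ((hle x hx T (right_mem_Icc.2 hT.le)).antisymm ?_)
    calc U x T ≤ U x 0 := hUT x hxI
      _ = a₀ + θ * parabola X R x := hcontact.trans (hh.initial _ (hmem hθ hx))
      _ ≤ barrier h a₀ X R θ x T :=
        hhT _ ⟨(hmem hθ hx).1.lt_of_ne' hbase_ne, (hmem hθ hx).2⟩
  · exact hne ⟨htpos, ht.2⟩ hcontact.symm

end Barrier

theorem IsFlow.not_tendsto_atTop {f h U : ℝ → ℝ → ℝ} {T δ a₀ X : ℝ} {s : Set ℝ} {Λ L : ℝ≥0}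
    (hh : IsFlow f T s (Icc a₀ (a₀ + δ)) h) (hT : 0 < T) (hδ : 0 < δ)
    (hf : IsC11On f (Icc 0 T) s Λ L)
    (hsmall : 4 * L * Real.exp (Λ * T) ^ 2 * δ < Real.exp (-(Λ + 1) * T))
    (hhT : ∀ a ∈ Ioc a₀ (a₀ + δ), a ≤ h a T) (hU : SatPDE f U (Ioi X) (Icc 0 T))
    (hUcont : ContinuousOn (fun q : ℝ × ℝ => U q.1 q.2) (Ici X ×ˢ Icc 0 T))
    (hUT : ∀ x > X, U x T ≤ U x 0) (hbase : ∀ x ≥ X, ∀ t ∈ Icc 0 T, h a₀ t < U x t)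
    (hleft : ∀ t ∈ Icc 0 T, h (a₀ + δ) t < U X t) : ¬ Tendsto (U · 0) atTop (𝓝 a₀) := by
  have h0 : (0 : ℝ) ∈ Icc 0 T := left_mem_Icc.2 hT.le
  have hbarrier : ∀ x ≥ X, ∀ R > 0, x ≤ X + R → a₀ + δ * parabola X R x ≤ U x 0 := by
    intro x hxX R hR hxR
    have hmem := add_mul_parabola_mem_Icc (a₀ := a₀) hR (right_mem_Icc.2 hδ.le) ⟨hxX, hxR⟩
    have hlt := barrier_lt hT hR hδ.le hh hf hsmall hhT (fun y hy => hU y hy.1)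
      (hUcont.mono (prod_mono_left Icc_subset_Ici_self)) (fun y hy => hUT y hy.1)
      (fun y hy => hbase y hy.1) hleft x ⟨hxX, hxR⟩ 0 h0
    rw [barrier, hh.initial _ hmem] at hlt
    exact hlt.le
  have hge : ∀ x ≥ X, a₀ + δ ≤ U x 0 := by
    intro x hxX
    have hlim := ((tendsto_parabola_atTop X x).const_mul δ).const_add a₀
    rw [mul_one] at hlim
    refine le_of_tendsto hlim ?_
    filter_upwards [eventually_gt_atTop 0, eventually_ge_atTop (x - X)] with R hR hxR
    exact hbarrier x hxX R hR (by linarith)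
  intro hlim
  have := ge_of_tendsto hlim ((eventually_ge_atTop X).mono hge)
  linarith

theorem lt_of_strictAntiOn_of_tendsto_atTop {φ : ℝ → ℝ} {x₀ x l : ℝ}
    (hφ : StrictAntiOn φ (Ioi x₀)) (hlim : Tendsto φ atTop (𝓝 l)) (hx : x₀ < x) : l < φ x := by
  have hx' : x₀ < x + 1 := by linarith
  have hle : l ≤ φ (x + 1) := le_of_tendsto hlim <| by
    filter_upwards [eventually_ge_atTop (x + 1)] with y hy
    exact hφ.antitoneOn hx' (hx'.trans_le hy) hy
  exact hle.trans_lt (hφ hx hx' (by linarith))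

theorem eventually_nhdsGT_zero_const_mul_lt (c : ℝ) {r : ℝ} (hr : 0 < r) :
    ∀ᶠ δ in 𝓝[>] (0 : ℝ), c * δ < r :=
  nhdsWithin_le_nhds <|
    ((continuous_const_mul c).tendsto' 0 0 (mul_zero c)).eventually_lt_const hr

theorem SatPDE.continuousOn_of_antitoneOn {f U : ℝ → ℝ → ℝ} {sx st : Set ℝ}
    (hU : SatPDE f U sx st) (hsx : IsOpen sx) (hanti : ∀ t ∈ st, AntitoneOn (U · t) sx) :
    ContinuousOn (fun q : ℝ × ℝ => U q.1 q.2) (sx ×ˢ st) :=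
  continuousOn_uncurry_of_antitoneOn hsx
    (fun t ht x hx => (hU x hx t ht).1.continuousAt.continuousWithinAt)
    (fun x hx t ht => (hU x hx t ht).2.2.continuousAt.continuousWithinAt) hanti

theorem exists_forall_add_le_of_forall_lt {f U : ℝ → ℝ → ℝ} {p : ℝ → ℝ} {sx st : Set ℝ} {x : ℝ}
    (hst : IsCompact st) (hU : SatPDE f U sx st) (hp : ContinuousOn p st) (hx : x ∈ sx)
    (hlt : ∀ t ∈ st, p t < U x t) : ∃ m > 0, ∀ t ∈ st, p t + m ≤ U x t := by
  have hUcont : ContinuousOn (U x) st := HasDerivAt.continuousOn fun t ht => (hU x hx t ht).2.2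
  obtain ⟨m, hm, hle⟩ := hst.exists_forall_le' (hUcont.sub hp) fun t ht => sub_pos.2 (hlt t ht)
  exact ⟨m, hm, fun t ht => le_sub_iff_add_le'.1 (hle t ht)⟩

theorem exists_isC11On_tube {f : ℝ → ℝ → ℝ} {J : Set ℝ} {p : ℝ → ℝ} (hJ : IsCompact J)
    (hf : ContinuousOn (fun q : ℝ × ℝ => f q.1 q.2) (J ×ˢ Ici 0))
    (hf_diff : ∀ t ∈ J, ∀ v ≥ 0, DifferentiableAt ℝ (f t) v)
    (hfLip : ∀ K : ℝ, ∃ L : ℝ≥0, ∀ t ∈ J, LipschitzOnWith L (deriv (f t)) (Icc 0 K))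
    (hp₀ : ∀ t ∈ J, 0 ≤ p t) (hp : ContinuousOn p J) :
    ∃ (s : Set ℝ) (Λ L : ℝ≥0), IsC11On f J s Λ L ∧ ∀ t ∈ J, Icc (p t) (p t + 1) ⊆ s := by
  obtain ⟨P, hP⟩ := hJ.bddAbove_image hp
  have hpP : ∀ t ∈ J, p t + 1 ≤ max P 0 + 1 := fun t ht => by
    gcongr
    exact (hP (mem_image_of_mem p ht)).trans (le_max_left P 0)
  obtain ⟨L, hL⟩ := hfLip (max P 0 + 1)
  obtain ⟨Λ, hΛ⟩ := exists_isC11On_Icc hJ (by positivity)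
    (hf.mono (prod_mono_right Icc_subset_Ici_self)) (fun t ht v hv => hf_diff t ht v hv.1) hL
  exact ⟨_, Λ, L, hΛ, fun t ht => Icc_subset_Icc (hp₀ t ht) (hpP t ht)⟩

theorem EntireSol.strictAntiOn {f U : ℝ → ℝ → ℝ} {x₀ : ℝ} (hU : EntireSol f U)
    (hsym : SymDecr U x₀) (t : ℝ) : StrictAntiOn (U · t) (Ioi x₀) :=
  strictAntiOn_of_deriv_neg (convex_Ioi x₀)
    (fun x _ => (hU x (mem_univ x) t (mem_univ t)).1.continuousAt.continuousWithinAt)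
    fun x hx => hsym.2 x t (interior_subset hx)

theorem base_not_in_YPer_general {T : ℝ} (hT : 0 < T) {f : ℝ → ℝ → ℝ}
    (hf : ContinuousOn (fun q : ℝ × ℝ => f q.1 q.2) (Icc 0 T ×ˢ Ici 0))
    (hf_diff : ∀ t ∈ Icc 0 T, ∀ v ≥ 0, DifferentiableAt ℝ (f t) v)
    (hfLip : ∀ K : ℝ, ∃ L : ℝ≥0, ∀ t ∈ Icc 0 T, LipschitzOnWith L (deriv (f t)) (Icc 0 K))
    {p : ℝ → ℝ} (hp₀ : ∀ t ∈ Icc 0 T, 0 ≤ p t) (hp : ODESolOn f p (Icc 0 T))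
    {x₀ : ℝ} {U : ℝ → ℝ → ℝ} (hU : SatPDE f U (Ioi x₀) (Icc 0 T))
    (hUT : ∀ x > x₀, U x T ≤ U x 0) (hUanti : ∀ t ∈ Icc 0 T, StrictAntiOn (U · t) (Ioi x₀))
    (hUlim : ∀ t ∈ Icc 0 T, Tendsto (U · t) atTop (𝓝 (p t))) :
    ∀ ε > 0, ∃ a ∈ Ioo (p 0) (p 0 + ε), ∀ g, ODESolOn f g (Icc 0 T) → g 0 = a → g T < a := by
  by_contra! ⟨ε, hε, hsol⟩
  have hx₀ : x₀ < x₀ + 1 := lt_add_one x₀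
  have hpU : ∀ x > x₀, ∀ t ∈ Icc 0 T, p t < U x t := fun x hx t ht =>
    lt_of_strictAntiOn_of_tendsto_atTop (φ := (U · t)) (hUanti t ht) (hUlim t ht) hx
  have hUcont := hU.continuousOn_of_antitoneOn isOpen_Ioi fun t ht => (hUanti t ht).antitoneOn
  have hpcont : ContinuousOn p (Icc 0 T) := HasDerivAt.continuousOn hp
  obtain ⟨m, hm, hgap⟩ :=
    exists_forall_add_le_of_forall_lt isCompact_Icc hU hpcont hx₀ (hpU _ hx₀)
  obtain ⟨s, Λ, L, hC11, htube⟩ := exists_isC11On_tube isCompact_Icc hf hf_diff hfLip hp₀ hpcont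
  have hlip : ∀ t ∈ Icc 0 T, LipschitzOnWith Λ (f t) s := fun t ht => hC11.lipschitzOnWith ht
  obtain ⟨δ, hδε, hδtube, hδm, hδsmall, hδ : 0 < δ⟩ :=
    ((eventually_nhdsGT_zero_const_mul_lt 1 hε).and <|
      (eventually_nhdsGT_zero_const_mul_lt (Real.exp ((Λ + 1) * T)) one_pos).and <|
      (eventually_nhdsGT_zero_const_mul_lt (Real.exp (Λ * T)) hm).and <|
      (eventually_nhdsGT_zero_const_mul_lt (4 * L * Real.exp (Λ * T) ^ 2)
        (Real.exp_pos (-(Λ + 1) * T))).and self_mem_nhdsWithin).exists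
  obtain ⟨h, hh, hhp, hhT⟩ := exists_isFlow hδ.le hlip hp
    (fun t ht => (Icc_subset_Icc_right (by linarith)).trans (htube t ht))
    fun a ha => hsol a ⟨ha.1, by linarith [ha.2]⟩
  have hleft : ∀ t ∈ Icc 0 T, h (p 0 + δ) t < U (x₀ + 1) t := by
    intro t ht
    have hdist := (le_abs_self _).trans <|
      hh.abs_sub_le hlip (right_mem_Icc.2 (by linarith)) (left_mem_Icc.2 (by linarith)) ht
    rw [hhp, add_sub_cancel_left, abs_of_pos hδ] at hdist
    linarith [hgap t ht]
  exact hh.not_tendsto_atTop hT hδ hC11 hδsmall hhT (fun x hx => hU x (hx₀.trans hx))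
    (hUcont.mono (prod_mono_left (Ici_subset_Ioi.2 hx₀))) (fun x hx => hUT x (hx₀.trans hx))
    (fun x hx => by rw [hhp]; exact hpU x (hx₀.trans_le hx)) hleft (hUlim 0 (left_mem_Icc.2 hT.le))

theorem base_not_in_YPer
    (T : ℝ) (hT : 0 < T) (f : ℝ → ℝ → ℝ)
    (hf_cont : Continuous fun q : ℝ × ℝ => f q.1 q.2)
    (hf_C1 : ∀ t, ContDiff ℝ 1 (f t))
    (hfT : ∀ t v : ℝ, 0 ≤ v → f (t + T) v = f t v)
    (hfLip : ∀ K : ℝ, ∃ L : ℝ, ∀ t : ℝ, ∀ v ∈ Set.Icc (0:ℝ) K, ∀ w ∈ Set.Icc (0:ℝ) K,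
      |deriv (f t) v - deriv (f t) w| ≤ L * |v - w|)
    (p : ℝ → ℝ) (hp : XPer T f p)
    (x₀ : ℝ) (U : ℝ → ℝ → ℝ)
    (hU : EntireSol f U) (hUper : TPer T U) (hUsym : SymDecr U x₀)
    (hUpos : ∀ x t, 0 ≤ U x t) (hUbdd : ∃ C, ∀ x t, |U x t| ≤ C)
    (hUbase : HasBase U p) :
    ∀ ε > (0:ℝ), ∃ a ∈ Set.Ioo (p 0) (p 0 + ε),
      ∀ g : ℝ → ℝ, ODESolOn f g (Set.Icc 0 T) → g 0 = a → g T < a := by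
  exact base_not_in_YPer_general hT hf_cont.continuousOn
    (fun t _ v _ => (hf_C1 t).differentiable one_ne_zero v)
    (fun K => (hfLip K).imp' Real.toNNReal fun _ hL t _ => .of_dist_le' (hL t))
    (fun t _ => hp.1 t) (fun t _ => hp.2.2 t (mem_univ t))
    (fun x _ t _ => hU x (mem_univ x) t (mem_univ t)) (fun x _ => (zero_add T ▸ hUper x 0).le)
    (fun t _ => hU.strictAntiOn hUsym t) fun t _ => (hUbase t).1
end
end

section
/- Let p₋ < p₊ be two elements of X_per such that for each a ∈ (p₋(0), p₊(0)), the sequence m ↦ h(t+mT; a) is increasing in m and converges to p₊(t) as m → ∞ locally uniformly in t ∈ ℝ. Then there exists a smooth function g : [p₋(0), p₊(0)] → [0,∞) with g(p₋(0)) = g(p₊(0)) = 0 such that for every a ∈ (p₋(0), p₊(0)): g(a) > 0 and h(T; a; g(a)) > a, where h(t; a; ε) denotes the solution of the perturbed ODE h_t = f(t,h) − ε with h(0) = a. -/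
open Filter Topology Set MeasureTheory

noncomputable section

/-!
Solutions of `h_t = f(t, h)` need not be unique, so the one starting at `a` is approached from
below: if `εₙ` decreases to `0`, a smooth field lying strictly between `f - εₙ` and `f - εₙ₊₁` has,
by Picard–Lindelöf, a solution `wₙ` with `wₙ(0) = a - εₙ`, and by comparison `wₙ` increases
with `n`. After `f` is made bounded by freezing it outside the strip between `p₋` and `p₊`, the
limit is a solution `u` with `u(0) = a`. The growth hypothesis gives `u(T) > a`, hence `wₙ(T) > a`
for some `n`. This `wₙ` lies below every solution of `η_t = f - ε` with `η(0)` close to `a` and `ε`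
small, so the condition `η(T) > η(0)` holds for all perturbations near `(a, 0)`. A smooth `g` below
the resulting threshold is obtained by integrating along the fibres `{a} × (0, 1)` a smooth function
supported exactly on the interior of the hypograph of that threshold.
-/

open Function Metric

section SmoothSelection

variable {X : Type*} {E : Type*} [NormedAddCommGroup E] [NormedSpace ℝ E]

lemma exists_contDiff_between [FiniteDimensional ℝ E] {f g : E → ℝ} (hf : Continuous f)
    (hg : Continuous g) (hfg : ∀ x, f x < g x) (n : ℕ∞) :
    ∃ h : E → ℝ, ContDiff ℝ n h ∧ ∀ x, h x ∈ Ioo (f x) (g x) := by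
  obtain ⟨h, hh, hdist, -⟩ := ((hf.add hg).div_const 2).exists_contDiff_approx n
    ((hg.sub hf).div_const 2) fun x ↦ half_pos (sub_pos.2 (hfg x))
  refine ⟨h, hh, fun x ↦ ?_⟩
  have hx := hdist x
  simp only [Real.dist_eq, abs_lt, Pi.add_apply, Pi.sub_apply] at hx
  constructor <;> linarith [hx.1, hx.2]

lemma contDiff_integral_of_support_subset {Φ : E × ℝ → ℝ} {k : Set ℝ} {n : ℕ∞}
    (hΦ : ContDiff ℝ n Φ) (hk : IsCompact k) (hsupp : ∀ x, support (fun e ↦ Φ (x, e)) ⊆ k) :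
    ContDiff ℝ n fun x ↦ ∫ e, Φ (x, e) := by
  have hconv := contDiffOn_convolution_right_with_param (μ := volume) (f := fun _ : ℝ ↦ (1 : ℝ))
    (g := fun x e ↦ Φ (x, e)) (ContinuousLinearMap.mul ℝ ℝ) isOpen_univ hk
    (fun x e _ he ↦ notMem_support.1 fun h ↦ he (hsupp x h)) (locallyIntegrable_const 1)
    hΦ.contDiffOn
  rw [univ_prod_univ, contDiffOn_univ] at hconv
  convert hconv.comp (contDiff_id.prodMk (contDiff_const (c := (0 : ℝ)))) using 2 with x
  simp only [comp, convolution, ContinuousLinearMap.mul_apply', one_mul, id, zero_sub]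
  exact (integral_neg_eq_self (fun e ↦ Φ (x, e)) volume).symm

lemma exists_mem_support_gt_of_lt_integral {φ : ℝ → ℝ} {c : ℝ} (hφ : ∀ e, ‖φ e‖ ≤ 1)
    (hsupp : support φ ⊆ Ioi 0) (hc : 0 ≤ c) (hcφ : c < ∫ e, φ e) : ∃ e ∈ support φ, c < e := by
  by_contra! hle
  have hsub : support φ ⊆ Ioc 0 c := fun e he ↦ ⟨hsupp he, hle e he⟩
  have hnorm : ‖∫ e in Ioc 0 c, φ e‖ ≤ 1 * volume.real (Ioc 0 c) :=
    norm_setIntegral_le_of_norm_le_const (by simp) fun e _ ↦ hφ e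
  rw [setIntegral_eq_integral_of_forall_compl_eq_zero
    fun e he ↦ notMem_support.1 fun h ↦ he (hsub h)] at hnorm
  rw [Real.volume_real_Ioc_of_le hc, one_mul, sub_zero] at hnorm
  exact (hcφ.trans_le (Real.le_norm_self _)).not_ge hnorm

/-- The points `(x, c)`, with `x ∈ U` and `0 < c < 1`, such that `P x ε` holds for all
`ε ∈ (0, c]`: the hypograph of the largest threshold below which `P x` is guaranteed. -/
def thresholdHypograph (U : Set X) (P : X → ℝ → Prop) : Set (X × ℝ) :=
  {q | q.1 ∈ U ∧ q.2 ∈ Ioo 0 1 ∧ ∀ ε ∈ Ioc 0 q.2, P q.1 ε}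

lemma exists_mem_interior_thresholdHypograph [TopologicalSpace X] {U : Set X}
    {P : X → ℝ → Prop} {x : X} (hU : IsOpen U) (hx : x ∈ U)
    (hP : ∀ᶠ q in 𝓝 x ×ˢ 𝓝[>] 0, P q.1 q.2) :
    ∃ c, (x, c) ∈ interior (thresholdHypograph U P) := by
  obtain ⟨A, hA, B, hB, hAB⟩ := eventually_prod_iff.1 hP
  obtain ⟨r, hr, hrB⟩ := mem_nhdsGT_iff_exists_Ioo_subset.1 hB
  have hm : 0 < min r 1 := lt_min hr one_pos
  have hc : min r 1 / 2 ∈ Ioo 0 (min r 1) := ⟨half_pos hm, half_lt_self hm⟩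
  refine ⟨min r 1 / 2, mem_interior_iff_mem_nhds.2 <| mem_of_superset
    (prod_mem_nhds (inter_mem (hU.mem_nhds hx) hA) (isOpen_Ioo.mem_nhds hc)) ?_⟩
  rintro ⟨y, c⟩ ⟨⟨hyU, hyA⟩, hc0, hc1⟩
  exact ⟨hyU, ⟨hc0, hc1.trans_le (min_le_right _ _)⟩, fun ε hε ↦ hAB hyA <|
    hrB ⟨hε.1, hε.2.trans_lt (hc1.trans_le (min_le_left _ _))⟩⟩

theorem exists_contDiff_support_eq_forall_mem [FiniteDimensional ℝ E] {U : Set E}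
    (hU : IsOpen U) {P : E → ℝ → Prop}
    (hP : ∀ x ∈ U, ∀ᶠ q in 𝓝 x ×ˢ 𝓝[>] 0, P q.1 q.2) (n : ℕ∞) :
    ∃ g : E → ℝ, ContDiff ℝ n g ∧ (∀ x, 0 ≤ g x) ∧ support g = U ∧ ∀ x ∈ U, P x (g x) := by
  obtain ⟨Φ, hΦsupp, hΦ, hΦrange⟩ :=
    (isOpen_interior (s := thresholdHypograph U P)).exists_contDiff_support_eq (n := n)
  have hΦ0 (q) : 0 ≤ Φ q := (hΦrange (mem_range_self q)).1
  have hΦ1 (q) : ‖Φ q‖ ≤ 1 := by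
    rw [Real.norm_of_nonneg (hΦ0 q)]
    exact (hΦrange (mem_range_self q)).2
  have hmem (x e) (h : e ∈ support fun e ↦ Φ (x, e)) : (x, e) ∈ thresholdHypograph U P :=
    interior_subset (hΦsupp ▸ h)
  have hfibre (x) : support (fun e ↦ Φ (x, e)) ⊆ Icc 0 1 :=
    fun e he ↦ Ioo_subset_Icc_self (hmem x e he).2.1
  have hpos {x} (hx : x ∈ U) : 0 < ∫ e, Φ (x, e) := by
    obtain ⟨c, hc⟩ := exists_mem_interior_thresholdHypograph hU hx (hP x hx)
    refine (hΦ.continuous.comp (.prodMk_right x)).integral_pos_of_hasCompactSupport_nonneg_nonzero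
      (.of_support_subset_isCompact isCompact_Icc (hfibre x)) (fun e ↦ hΦ0 _) (x := c) ?_
    rwa [← hΦsupp] at hc
  have hzero {x} (hx : x ∉ U) : ∫ e, Φ (x, e) = 0 :=
    integral_eq_zero_of_ae <| .of_forall fun e ↦ notMem_support.1 fun h ↦ hx (hmem x e h).1
  -- As `0 ≤ Φ ≤ 1`, a fibre of the support must reach beyond any number below its integral.
  refine ⟨fun x ↦ (∫ e, Φ (x, e)) / 2,
    (contDiff_integral_of_support_subset hΦ isCompact_Icc hfibre).div_const 2,
    fun x ↦ div_nonneg (integral_nonneg fun e ↦ hΦ0 _) zero_le_two, ?_, fun x hx ↦ ?_⟩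
  · ext x
    by_cases hx : x ∈ U
    · simp [hx, (hpos hx).ne']
    · simp [hx, hzero hx]
  · obtain ⟨e, he, hlt⟩ := exists_mem_support_gt_of_lt_integral (fun e ↦ hΦ1 (x, e))
      (fun e he ↦ (hmem x e he).2.1.1) (half_pos (hpos hx)).le (half_lt_self (hpos hx))
    exact (hmem x e he).2.2 _ ⟨half_pos (hpos hx), hlt.le⟩

end SmoothSelection

section Comparison

/-- A subsolution of `u' = f(t, u)` on `s`, with strict inequality. -/
def StrictSubsolOn (f : ℝ → ℝ → ℝ) (u : ℝ → ℝ) (s : Set ℝ) : Prop :=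
  ∀ t ∈ s, DifferentiableAt ℝ u t ∧ deriv u t < f t (u t)

/-- A supersolution of `u' = f(t, u)` on `s`. -/
def SupersolOn (f : ℝ → ℝ → ℝ) (u : ℝ → ℝ) (s : Set ℝ) : Prop :=
  ∀ t ∈ s, DifferentiableAt ℝ u t ∧ f t (u t) ≤ deriv u t

variable {f g : ℝ → ℝ → ℝ} {u v : ℝ → ℝ} {s s' : Set ℝ} {a b t : ℝ}

lemma StrictSubsolOn.mono (hu : StrictSubsolOn f u s) (hs : s' ⊆ s) : StrictSubsolOn f u s' :=
  fun t ht ↦ hu t (hs ht)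

lemma StrictSubsolOn.of_le (hu : StrictSubsolOn f u s) (hfg : ∀ t ∈ s, f t (u t) ≤ g t (u t)) :
    StrictSubsolOn g u s :=
  fun t ht ↦ ⟨(hu t ht).1, (hu t ht).2.trans_le (hfg t ht)⟩

lemma SupersolOn.mono (hu : SupersolOn f u s) (hs : s' ⊆ s) : SupersolOn f u s' :=
  fun t ht ↦ hu t (hs ht)

lemma ODESolOn.mono (hu : ODESolOn f u s) (hs : s' ⊆ s) : ODESolOn f u s' :=
  fun t ht ↦ hu t (hs ht)

lemma ODESolOn.congr (hu : ODESolOn f u s) (hfg : ∀ t ∈ s, f t (u t) = g t (u t)) :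
    ODESolOn g u s :=
  fun t ht ↦ hfg t ht ▸ hu t ht

lemma ODESolOn.continuous (hu : ODESolOn f u univ) : Continuous u :=
  continuous_iff_continuousAt.2 fun t ↦ (hu t (mem_univ t)).continuousAt

lemma ODESolOn.supersolOn (hu : ODESolOn f u s) : SupersolOn f u s :=
  fun t ht ↦ ⟨(hu t ht).differentiableAt, (hu t ht).deriv.ge⟩

theorem StrictSubsolOn.le_supersolOn (hu : StrictSubsolOn f u (Icc a b))
    (hv : SupersolOn f v (Icc a b)) (h : u a ≤ v a) (ht : t ∈ Icc a b) : u t ≤ v t :=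
  image_le_of_deriv_right_lt_deriv_boundary'
    (fun x hx ↦ (hu x hx).1.continuousAt.continuousWithinAt)
    (fun x hx ↦ (hu x (Ico_subset_Icc_self hx)).1.hasDerivAt.hasDerivWithinAt) h
    (fun x hx ↦ (hv x hx).1.continuousAt.continuousWithinAt)
    (fun x hx ↦ (hv x (Ico_subset_Icc_self hx)).1.hasDerivAt.hasDerivWithinAt)
    (fun x hx hxuv ↦ (hu x (Ico_subset_Icc_self hx)).2.trans_le
      (hxuv ▸ (hv x (Ico_subset_Icc_self hx)).2)) ht

lemma StrictSubsolOn.supersolOn_lt (hu : StrictSubsolOn f u (Icc a b))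
    (hv : SupersolOn f v (Icc a b)) (h : v b < u b) (ht : t ∈ Icc a b) : v t < u t := by
  contrapose! h
  have hsub : Icc t b ⊆ Icc a b := Icc_subset_Icc_left ht.1
  exact (hu.mono hsub).le_supersolOn (hv.mono hsub) h (right_mem_Icc.2 ht.2)

lemma ODESolOn.max (hu : ODESolOn f u s) (hv : ODESolOn f v s) :
    ODESolOn f (fun t ↦ max (u t) (v t)) s := by
  intro t ht
  have hut := hu t ht
  have hvt := hv t ht
  rcases lt_trichotomy (u t) (v t) with h | h | h
  · have heq : (fun τ ↦ Max.max (u τ) (v τ)) =ᶠ[𝓝 t] v := by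
      filter_upwards [hut.continuousAt.eventually_lt hvt.continuousAt h] with τ hτ
      exact max_eq_right hτ.le
    simpa only [max_eq_right h.le] using hvt.congr_of_eventuallyEq heq
  · rw [← h] at hvt
    rw [hasDerivAt_iff_isLittleO] at hut hvt ⊢
    simp only [← h, max_self] at hvt ⊢
    refine Asymptotics.IsLittleO.of_bound fun c hc ↦ ?_
    filter_upwards [hut.bound hc, hvt.bound hc] with τ hτu hτv
    rcases max_choice (u τ) (v τ) with hmax | hmax <;> rwa [hmax]
  · have heq : (fun τ ↦ Max.max (u τ) (v τ)) =ᶠ[𝓝 t] u := by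
      filter_upwards [hvt.continuousAt.eventually_lt hut.continuousAt h] with τ hτ
      exact max_eq_left hτ.le
    simpa only [max_eq_left h.le] using hut.congr_of_eventuallyEq heq

end Comparison

section Limits

/-- Boundedness on `I × ℝ` for every compact interval `I`: the growth condition under which
solutions of `u' = F(t, u)` exist for all times. -/
def BoundedOnSlabs (F : ℝ → ℝ → ℝ) : Prop :=
  ∀ R, ∃ M, ∀ t ∈ Icc (-R) R, ∀ x, |F t x| ≤ M

variable {ι E : Type*} [NormedAddCommGroup E] [NormedSpace ℝ E] {l : Filter ι} [l.NeBot]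

lemma integral_eq_sub_of_tendsto_deriv [CompleteSpace E] [SecondCountableTopology E]
    [l.IsCountablyGenerated] {w : ι → ℝ → E} {W g : ℝ → E} {a b M : ℝ}
    (hw : ∀ᶠ n in l, ∀ t ∈ uIcc a b, DifferentiableAt ℝ (w n) t ∧ ‖deriv (w n) t‖ ≤ M)
    (hderiv : ∀ t ∈ uIcc a b, Tendsto (fun n ↦ deriv (w n) t) l (𝓝 (g t)))
    (ha : Tendsto (w · a) l (𝓝 (W a))) (hb : Tendsto (w · b) l (𝓝 (W b))) :
    ∫ t in a..b, g t = W b - W a := by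
  have hmeas (n) (μ : Measure ℝ) : AEStronglyMeasurable (deriv (w n)) μ :=
    (stronglyMeasurable_deriv _).aestronglyMeasurable
  have hbound {n} (hn : ∀ t ∈ uIcc a b, DifferentiableAt ℝ (w n) t ∧ ‖deriv (w n) t‖ ≤ M) :
      ∀ t ∈ uIoc a b, ‖deriv (w n) t‖ ≤ M := fun t ht ↦ (hn t (uIoc_subset_uIcc ht)).2
  have hint : Tendsto (fun n ↦ ∫ t in a..b, deriv (w n) t) l (𝓝 (∫ t in a..b, g t)) :=
    intervalIntegral.tendsto_integral_filter_of_dominated_convergence (fun _ ↦ M)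
      (.of_forall fun n ↦ hmeas n _) (hw.mono fun n hn ↦ .of_forall (hbound hn))
      intervalIntegrable_const (.of_forall fun t ht ↦ hderiv t (uIoc_subset_uIcc ht))
  refine tendsto_nhds_unique (hint.congr' ?_) (hb.sub ha)
  filter_upwards [hw] with n hn
  refine intervalIntegral.integral_deriv_eq_sub (fun t ht ↦ (hn t ht).1) ?_
  exact (intervalIntegrable_const (c := M)).mono_fun' (hmeas n _) <|
    (ae_restrict_iff' measurableSet_uIoc).2 (.of_forall (hbound hn))

lemma lipschitzOnWith_of_tendsto_of_norm_deriv_le {w : ι → ℝ → E} {W : ℝ → E} {s : Set ℝ}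
    {M : ℝ} (hs : Convex ℝ s)
    (hw : ∀ᶠ n in l, ∀ t ∈ s, DifferentiableAt ℝ (w n) t ∧ ‖deriv (w n) t‖ ≤ M)
    (hW : ∀ t ∈ s, Tendsto (w · t) l (𝓝 (W t))) : LipschitzOnWith M.toNNReal W s := by
  refine .of_dist_le' fun x hx y hy ↦ le_of_tendsto ((hW x hx).dist (hW y hy)) ?_
  filter_upwards [hw] with n hn
  rw [dist_eq_norm, dist_eq_norm]
  exact hs.norm_image_sub_le_of_norm_deriv_le (fun t ht ↦ (hn t ht).1) (fun t ht ↦ (hn t ht).2)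
    hy hx

lemma exists_odeSolOn_of_eq_integral {F : ℝ → ℝ → ℝ} {W : ℝ → ℝ} (hF : Continuous (uncurry F))
    (hW : ContinuousOn W (Ici 0)) (hFW : ∀ t ∈ Ici 0, ∫ τ in (0)..t, F τ (W τ) = W t - W 0) :
    ∃ u, ODESolOn F u (Ici 0) ∧ EqOn u W (Ici 0) := by
  have hmax : Continuous fun τ ↦ F τ (W (max τ 0)) :=
    hF.comp <| continuous_id.prodMk <|
      hW.comp_continuous (by fun_prop) fun τ ↦ le_max_right τ 0
  let u (t : ℝ) : ℝ := W 0 + ∫ τ in (0)..t, F τ (W (max τ 0))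
  have hu : EqOn u W (Ici 0) := by
    intro t ht
    have hcongr : ∫ τ in (0)..t, F τ (W (max τ 0)) = ∫ τ in (0)..t, F τ (W τ) :=
      intervalIntegral.integral_congr fun τ hτ ↦ by
        rw [uIcc_of_le (mem_Ici.1 ht)] at hτ
        simp only [max_eq_left hτ.1]
    simp only [u, hcongr, hFW t ht, add_sub_cancel]
  refine ⟨u, fun t ht ↦ ?_, hu⟩
  have hderiv := (hmax.integral_hasStrictDerivAt 0 t).hasDerivAt.const_add (W 0)
  rwa [max_eq_left ht, ← hu ht] at hderiv

lemma exists_odeSolOn_of_tendsto_of_norm_deriv_le [l.IsCountablyGenerated]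
    {F : ℝ → ℝ → ℝ} {w : ι → ℝ → ℝ} {W : ℝ → ℝ} (hF : Continuous (uncurry F))
    (hw : ∀ b, ∃ M, ∀ᶠ n in l, ∀ t ∈ Icc 0 b, DifferentiableAt ℝ (w n) t ∧ ‖deriv (w n) t‖ ≤ M)
    (hdefect : ∀ t ∈ Ici 0, Tendsto (fun n ↦ deriv (w n) t - F t (w n t)) l (𝓝 0))
    (hW : ∀ t ∈ Ici 0, Tendsto (w · t) l (𝓝 (W t))) :
    ∃ u, ODESolOn F u (Ici 0) ∧ EqOn u W (Ici 0) := by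
  have hderiv (t : ℝ) (ht : t ∈ Ici 0) : Tendsto (fun n ↦ deriv (w n) t) l (𝓝 (F t (W t))) := by
    have hFw : Tendsto (fun n ↦ F t (w n t)) l (𝓝 (F t (W t))) :=
      (hF.tendsto (t, W t)).comp (tendsto_const_nhds.prodMk_nhds (hW t ht))
    simpa using (hdefect t ht).add hFw
  have hWcont : ContinuousOn W (Ici 0) := by
    intro t ht
    obtain ⟨M, hM⟩ := hw (t + 1)
    have hlip := lipschitzOnWith_of_tendsto_of_norm_deriv_le (convex_Icc 0 (t + 1)) hM
      fun τ hτ ↦ hW τ hτ.1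
    refine (hlip.continuousOn t ⟨ht, (lt_add_one t).le⟩).mono_of_mem_nhdsWithin ?_
    exact inter_mem_nhdsWithin _ (Iic_mem_nhds (lt_add_one t))
  refine exists_odeSolOn_of_eq_integral hF hWcont fun t ht ↦ ?_
  obtain ⟨M, hM⟩ := hw t
  rw [← uIcc_of_le (mem_Ici.1 ht)] at hM
  exact integral_eq_sub_of_tendsto_deriv hM
    (fun τ hτ ↦ hderiv τ (uIcc_of_le (mem_Ici.1 ht) ▸ hτ).1) (hW 0 self_mem_Ici) (hW t ht)

theorem exists_odeSolOn_of_tendsto [l.IsCountablyGenerated] {F : ℝ → ℝ → ℝ}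
    {w : ι → ℝ → ℝ} {W : ℝ → ℝ} {δ : ι → ℝ} (hF : Continuous (uncurry F))
    (hFM : BoundedOnSlabs F) (hδ : Tendsto δ l (𝓝 0))
    (hw : ∀ b, ∀ᶠ n in l, ∀ t ∈ Icc 0 b,
      DifferentiableAt ℝ (w n) t ∧ |deriv (w n) t - F t (w n t)| ≤ δ n)
    (hW : ∀ t ∈ Ici 0, Tendsto (w · t) l (𝓝 (W t))) :
    ∃ u, ODESolOn F u (Ici 0) ∧ EqOn u W (Ici 0) := by
  refine exists_odeSolOn_of_tendsto_of_norm_deriv_le hF (fun b ↦ ?_) (fun t ht ↦ ?_) hW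
  · obtain ⟨M, hM⟩ := hFM b
    refine ⟨M + 1, ?_⟩
    filter_upwards [hw b, hδ.eventually_le_const one_pos] with n hn hδn t ht
    have hFt := hM t ⟨by linarith [ht.1, ht.2], ht.2⟩ (w n t)
    refine ⟨(hn t ht).1, ?_⟩
    rw [Real.norm_eq_abs]
    linarith [abs_sub_abs_le_abs_sub (deriv (w n) t) (F t (w n t)), (hn t ht).2]
  · refine squeeze_zero_norm' ?_ hδ
    filter_upwards [hw t] with n hn
    exact (hn t ⟨ht, le_rfl⟩).2

end Limits

section PeanoFromBelow

variable {E : Type*} [NormedAddCommGroup E] [NormedSpace ℝ E] [FiniteDimensional ℝ E]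

lemma exists_hasDerivAt_of_contDiff_of_norm_le {v : ℝ → E → E} {tmin t₀ tmax M : ℝ}
    (hv : ContDiff ℝ 1 (uncurry v)) (hM : ∀ t ∈ Icc tmin tmax, ∀ x, ‖v t x‖ ≤ M)
    (ht₀ : t₀ ∈ Icc tmin tmax) (x₀ : E) :
    ∃ u : ℝ → E, u t₀ = x₀ ∧ ∀ t ∈ Ioo tmin tmax, HasDerivAt u (v t (u t)) t := by
  have hM0 : 0 ≤ M := (norm_nonneg _).trans (hM t₀ ht₀ 0)
  let L : NNReal := ⟨M, hM0⟩
  let τ : NNReal := ⟨max (tmax - t₀) (t₀ - tmin), le_max_of_le_left (sub_nonneg.2 ht₀.2)⟩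
  obtain ⟨K, hK⟩ := hv.contDiffOn.exists_lipschitzOnWith one_ne_zero
    ((convex_Icc tmin tmax).prod (convex_closedBall x₀ (L * τ)))
    (isCompact_Icc.prod (isCompact_closedBall x₀ (L * τ)))
  have hPL : IsPicardLindelof v (⟨t₀, ht₀⟩ : Icc tmin tmax) x₀ (L * τ) 0 L K :=
    { lipschitzOnWith := fun t ht ↦ .of_dist_le_mul fun x hx y hy ↦ by
        simpa [Prod.dist_eq] using! hK.dist_le_mul (t, x) ⟨ht, hx⟩ (t, y) ⟨ht, hy⟩
      continuousOn := fun x _ ↦ (hv.continuous.comp (.prodMk_left x)).continuousOn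
      norm_le := fun t ht x _ ↦ hM t ht x
      mul_max_le := (sub_zero _).ge }
  obtain ⟨u, hu₀, hu⟩ := hPL.exists_eq_forall_mem_Icc_hasDerivWithinAt₀
  exact ⟨u, hu₀, fun t ht ↦ (hu t (Ioo_subset_Icc_self ht)).hasDerivAt (Icc_mem_nhds ht.1 ht.2)⟩

lemma exists_deriv_mem_Ioo {f g : ℝ → ℝ → ℝ} {tmin t₀ tmax M : ℝ}
    (hf : Continuous (uncurry f)) (hg : Continuous (uncurry g)) (hfg : ∀ t x, f t x < g t x)
    (hfM : ∀ t ∈ Icc tmin tmax, ∀ x, -M ≤ f t x) (hgM : ∀ t ∈ Icc tmin tmax, ∀ x, g t x ≤ M)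
    (ht₀ : t₀ ∈ Icc tmin tmax) (x₀ : ℝ) :
    ∃ u : ℝ → ℝ, u t₀ = x₀ ∧ ∀ t ∈ Ioo tmin tmax,
      DifferentiableAt ℝ u t ∧ deriv u t ∈ Ioo (f t (u t)) (g t (u t)) := by
  obtain ⟨v, hv, hfvg⟩ := exists_contDiff_between hf hg (fun q ↦ hfg q.1 q.2) 1
  obtain ⟨u, hu₀, hu⟩ := exists_hasDerivAt_of_contDiff_of_norm_le (v := curry v) hv
    (fun t ht x ↦ abs_le.2 ⟨(hfM t ht x).trans (hfvg (t, x)).1.le,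
      (hfvg (t, x)).2.le.trans (hgM t ht x)⟩) ht₀ x₀
  refine ⟨u, hu₀, fun t ht ↦ ⟨(hu t ht).differentiableAt, ?_⟩⟩
  rw [(hu t ht).deriv]
  exact hfvg (t, u t)

variable {F : ℝ → ℝ → ℝ} {w : ℕ → ℝ → ℝ} {ε : ℕ → ℝ} {a : ℝ}

lemma exists_strictSubsolOn_seq (hF : Continuous (uncurry F))
    (hFM : BoundedOnSlabs F) (hε : StrictAnti ε) (a : ℝ) :
    ∃ w : ℕ → ℝ → ℝ, ∀ n, w n 0 = a - ε n ∧
      SupersolOn (fun t x ↦ F t x - ε n) (w n) (Icc 0 n) ∧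
      StrictSubsolOn (fun t x ↦ F t x - ε (n + 1)) (w n) (Icc 0 n) := by
  have hcont (c : ℝ) : Continuous (uncurry fun t x ↦ F t x - c) := hF.sub continuous_const
  have hex (n : ℕ) : ∃ u : ℝ → ℝ, u 0 = a - ε n ∧ ∀ t ∈ Ioo (-(n + 1 : ℝ)) (n + 1),
      DifferentiableAt ℝ u t ∧ deriv u t ∈ Ioo (F t (u t) - ε n) (F t (u t) - ε (n + 1)) := by
    obtain ⟨M, hM⟩ := hFM (n + 1)
    have hn : (0 : ℝ) ≤ n + 1 := by positivity
    refine exists_deriv_mem_Ioo (M := M + |ε n| + |ε (n + 1)|) (hcont (ε n)) (hcont (ε (n + 1)))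
      (fun t x ↦ sub_lt_sub_left (hε n.lt_succ_self) _) (fun t ht x ↦ ?_) (fun t ht x ↦ ?_)
      ⟨neg_nonpos.2 hn, hn⟩ _
    · linarith [(abs_le.1 (hM t ht x)).1, le_abs_self (ε n), abs_nonneg (ε (n + 1))]
    · linarith [(abs_le.1 (hM t ht x)).2, neg_abs_le (ε (n + 1)), abs_nonneg (ε n)]
  choose w hw₀ hw using hex
  have hsub (n : ℕ) : Icc 0 (n : ℝ) ⊆ Ioo (-(n + 1 : ℝ)) (n + 1) := fun t ht ↦
    ⟨by linarith [ht.1, ht.2], by linarith [ht.2]⟩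
  exact ⟨w, fun n ↦ ⟨hw₀ n, fun t ht ↦ ⟨(hw n t (hsub n ht)).1, (hw n t (hsub n ht)).2.1.le⟩,
    fun t ht ↦ ⟨(hw n t (hsub n ht)).1, (hw n t (hsub n ht)).2.2⟩⟩⟩

lemma exists_tendsto_of_strictSubsolOn_of_supersolOn
    (hFM : BoundedOnSlabs F) (hε : StrictAnti ε) (hε0 : ∀ n, 0 < ε n)
    (hw₀ : ∀ n, w n 0 = a - ε n)
    (hsuper : ∀ n, SupersolOn (fun t x ↦ F t x - ε n) (w n) (Icc 0 n))
    (hsub : ∀ n, StrictSubsolOn (fun t x ↦ F t x - ε (n + 1)) (w n) (Icc 0 n)) {t : ℝ}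
    (ht : 0 ≤ t) : ∃ x, Tendsto (w · t) atTop (𝓝 x) := by
  have hle {m n : ℕ} (hmn : m ≤ n) : Icc 0 (m : ℝ) ⊆ Icc 0 n :=
    Icc_subset_Icc_right (Nat.cast_le.2 hmn)
  have hmono (n : ℕ) (htn : t ≤ n) : w n t ≤ w (n + 1) t :=
    (hsub n).le_supersolOn ((hsuper (n + 1)).mono (hle n.le_succ))
      (by linarith [hw₀ n, hw₀ (n + 1), hε n.lt_succ_self]) ⟨ht, htn⟩
  obtain ⟨M, hM⟩ := hFM t
  have hbound (n : ℕ) (htn : t ≤ n) : w n t ≤ a + M * t := by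
    have hline : SupersolOn (fun _ _ ↦ M) (fun τ ↦ a + M * τ) (Icc 0 t) := fun τ _ ↦
      ⟨by fun_prop, by simp⟩
    have hwM : StrictSubsolOn (fun _ _ ↦ M) (w n) (Icc 0 t) :=
      ((hsub n).mono (Icc_subset_Icc_right htn)).of_le fun τ hτ ↦ by
        linarith [(abs_le.1 (hM τ ⟨by linarith [hτ.1], hτ.2⟩ (w n τ))).2, hε0 (n + 1)]
    exact hwM.le_supersolOn hline (by linarith [hw₀ n, hε0 n]) (right_mem_Icc.2 ht)
  have htk (n : ℕ) : t ≤ ↑(n + ⌈t⌉₊) :=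
    (Nat.le_ceil t).trans (Nat.cast_le.2 (Nat.le_add_left _ _))
  refine ⟨⨆ n, w (n + ⌈t⌉₊) t, (tendsto_add_atTop_iff_nat ⌈t⌉₊).1 ?_⟩
  refine tendsto_atTop_ciSup (monotone_nat_of_le_succ fun n ↦ ?_)
    ⟨a + M * t, forall_mem_range.2 fun n ↦ hbound _ (htk n)⟩
  rw [add_right_comm]
  exact hmono _ (htk n)

theorem exists_odeSolOn_tendsto_strictSubsolOn (hF : Continuous (uncurry F))
    (hFM : BoundedOnSlabs F) (a : ℝ) :
    ∃ (ε : ℕ → ℝ) (w : ℕ → ℝ → ℝ) (u : ℝ → ℝ),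
      (∀ n, 0 < ε n ∧ w n 0 < a ∧ StrictSubsolOn (fun t x ↦ F t x - ε n) (w n) (Icc 0 n)) ∧
      u 0 = a ∧ ODESolOn F u (Ici 0) ∧ ∀ t ∈ Ici 0, Tendsto (w · t) atTop (𝓝 (u t)) := by
  obtain ⟨ε, hε, hε0, hεlim⟩ := exists_seq_strictAnti_tendsto (0 : ℝ)
  obtain ⟨w, hw⟩ := exists_strictSubsolOn_seq hF hFM hε a
  choose hw₀ hsuper hsub using hw
  have hlim (t : ℝ) (ht : t ∈ Ici 0) : ∃ x, Tendsto (w · t) atTop (𝓝 x) :=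
    exists_tendsto_of_strictSubsolOn_of_supersolOn hFM hε hε0 hw₀ hsuper hsub ht
  choose! W hW using hlim
  have hdefect {n : ℕ} {t : ℝ} (ht : t ∈ Icc 0 (n : ℝ)) :
      DifferentiableAt ℝ (w n) t ∧ |deriv (w n) t - F t (w n t)| ≤ ε n :=
    ⟨(hsub n t ht).1, abs_le.2 ⟨by linarith [(hsuper n t ht).2],
      by linarith [(hsub n t ht).2, hε0 n, hε0 (n + 1)]⟩⟩
  obtain ⟨u, hu, huW⟩ := exists_odeSolOn_of_tendsto (W := W) hF hFM hεlim (fun b ↦ by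
    filter_upwards [eventually_ge_atTop ⌈b⌉₊] with n hn t ht
    exact hdefect ⟨ht.1, ht.2.trans (Nat.ceil_le.1 hn)⟩) hW
  refine ⟨fun n ↦ ε (n + 1), w, u, fun n ↦ ⟨hε0 _, by linarith [hw₀ n, hε0 n], hsub n⟩, ?_, hu,
    fun t ht ↦ huW ht ▸ hW t ht⟩
  rw [huW self_mem_Ici]
  exact tendsto_nhds_unique (hW 0 self_mem_Ici) (by simpa [hw₀] using hεlim.const_sub a)

end PeanoFromBelow

section Barrier

/-- The vector field `f` frozen outside the strip `p(t) ≤ x ≤ q(t)`: the argument `x` is projected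
onto `[p(t), q(t)]`. -/
def clampField (f : ℝ → ℝ → ℝ) (p q : ℝ → ℝ) (t x : ℝ) : ℝ :=
  f t (max (p t) (min (q t) x))

variable {f : ℝ → ℝ → ℝ} {p q : ℝ → ℝ} {a b t x T : ℝ}

lemma clampField_of_mem (hx : x ∈ Icc (p t) (q t)) : clampField f p q t x = f t x := by
  rw [clampField, min_eq_right hx.2, max_eq_right hx.1]

lemma continuous_clampField (hf : Continuous (uncurry f)) (hp : Continuous p)
    (hq : Continuous q) : Continuous (uncurry (clampField f p q)) :=
  hf.comp (g := uncurry f) (f := fun z : ℝ × ℝ ↦ (z.1, max (p z.1) (min (q z.1) z.2)))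
    (by fun_prop)

lemma boundedOnSlabs_clampField (hf : Continuous (uncurry f)) (hp : Continuous p)
    (hq : Continuous q) : BoundedOnSlabs (clampField f p q) := by
  intro R
  obtain ⟨B, hB⟩ := isCompact_Icc.exists_bound_of_continuousOn hp.continuousOn
  obtain ⟨C, hC⟩ := isCompact_Icc.exists_bound_of_continuousOn hq.continuousOn
  obtain ⟨M, hM⟩ := ((isCompact_Icc (a := -R) (b := R)).prod
    (isCompact_Icc (a := -B) (b := max B C))).exists_bound_of_continuousOn hf.continuousOn
  refine ⟨M, fun t ht x ↦ hM (t, _) ⟨ht, le_max_of_le_left (abs_le.1 (hB t ht)).1, ?_⟩⟩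
  exact max_le_max (abs_le.1 (hB t ht)).2 ((min_le_left _ _).trans (abs_le.1 (hC t ht)).2)

theorem exists_strictSubsolOn_lt (hf : Continuous (uncurry f)) (hp : ODESolOn f p univ)
    (hq : ODESolOn f q univ) (hpq : ∀ t, p t ≤ q t) (ha : a ∈ Icc (p 0) (q 0)) (hT : 0 ≤ T)
    (hpb : p T ≤ b) (hb : ∀ u, ODESolOn f u (Ici 0) → u 0 = a → b < u T) :
    ∃ ε > 0, ∃ w, StrictSubsolOn (fun t x ↦ f t x - ε) w (Icc 0 T) ∧ w 0 < a ∧ b < w T := by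
  set F := clampField f p q
  have hpF : ODESolOn F p univ := hp.congr fun t _ ↦
    (clampField_of_mem (left_mem_Icc.2 (hpq t))).symm
  have hqF : ODESolOn F q univ := hq.congr fun t _ ↦
    (clampField_of_mem (right_mem_Icc.2 (hpq t))).symm
  obtain ⟨ε, w, u, hw, hu₀, hu, hwu⟩ := exists_odeSolOn_tendsto_strictSubsolOn
    (continuous_clampField hf hp.continuous hq.continuous)
    (boundedOnSlabs_clampField hf hp.continuous hq.continuous) a
  have hwF {n : ℕ} {t : ℝ} (htn : t ≤ n) : StrictSubsolOn F (w n) (Icc 0 t) :=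
    ((hw n).2.2.mono (Icc_subset_Icc_right htn)).of_le fun _ _ ↦ sub_le_self _ (hw n).1.le
  have hwq {n : ℕ} {t : ℝ} (ht : 0 ≤ t) (htn : t ≤ n) : w n t ≤ q t :=
    (hwF htn).le_supersolOn (hqF.mono (subset_univ _)).supersolOn
      ((hw n).2.1.le.trans ha.2) (right_mem_Icc.2 ht)
  have huq (t : ℝ) (ht : t ∈ Ici 0) : u t ≤ q t :=
    le_of_tendsto (hwu t ht) <| (eventually_ge_atTop ⌈t⌉₊).mono fun n hn ↦
      hwq ht (Nat.ceil_le.1 hn)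
  have hbu : b < u T := by
    have hmax : ODESolOn f (fun t ↦ max (u t) (p t)) (Ici 0) :=
      (hu.max (hpF.mono (subset_univ _))).congr fun t ht ↦
        clampField_of_mem ⟨le_max_right _ _, max_le (huq t ht) (hpq t)⟩
    have hbmax := hb _ hmax (by rw [hu₀, max_eq_left ha.1])
    exact (lt_max_iff.1 hbmax).resolve_right hpb.not_gt
  obtain ⟨n, hbn, hTn⟩ := (((hwu T hT).eventually_const_lt hbu).and
    (eventually_ge_atTop ⌈T⌉₊)).exists
  replace hTn : T ≤ n := Nat.ceil_le.1 hTn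
  have hpw (t : ℝ) (ht : t ∈ Icc 0 T) : p t < w n t :=
    (hwF hTn).supersolOn_lt (hpF.mono (subset_univ _)).supersolOn (hpb.trans_lt hbn) ht
  refine ⟨ε n, (hw n).1, w n, ((hw n).2.2.mono (Icc_subset_Icc_right hTn)).of_le fun t ht ↦ ?_,
    (hw n).2.1, hbn⟩
  rw [clampField_of_mem ⟨(hpw t ht).le, hwq ht.1 (ht.2.trans hTn)⟩]

lemma eventually_forall_odeSolOn_lt {ε : ℝ} {w : ℝ → ℝ} (hT : 0 ≤ T) (hε : 0 < ε)
    (hw : StrictSubsolOn (fun t x ↦ f t x - ε) w (Icc 0 T)) (hwa : w 0 < a) (haw : a < w T) :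
    ∀ᶠ z in 𝓝 (a, (0 : ℝ)),
      ∀ u, ODESolOn (fun t x ↦ f t x - z.2) u (Icc 0 T) → u 0 = z.1 → z.1 < u T := by
  filter_upwards [prod_mem_nhds (Ioo_mem_nhds hwa haw) (Iio_mem_nhds hε)]
  rintro ⟨c, δ⟩ ⟨hc, hδ⟩ u hu hu₀
  have hwδ : StrictSubsolOn (fun t x ↦ f t x - δ) w (Icc 0 T) :=
    hw.of_le fun t _ ↦ sub_le_sub_left hδ.le _
  exact hc.2.trans_le <|
    hwδ.le_supersolOn hu.supersolOn (hu₀ ▸ hc.1.le) (right_mem_Icc.2 hT)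

end Barrier

theorem perturbation_function_exists_general {T : ℝ} (hT : 0 ≤ T) {f : ℝ → ℝ → ℝ}
    (hf : Continuous (uncurry f)) {pm pp : ℝ → ℝ} (hpm : ODESolOn f pm univ)
    (hpp : ODESolOn f pp univ) (hle : ∀ t, pm t ≤ pp t) (hpmT : pm T ≤ pm 0)
    (hgrow : ∀ a ∈ Ioo (pm 0) (pp 0), ∀ h, ODESolOn f h (Ici 0) → h 0 = a → a < h T) :
    ∃ g : ℝ → ℝ, ContDiffOn ℝ (⊤ : ℕ∞) g (Icc (pm 0) (pp 0)) ∧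
      (∀ a ∈ Icc (pm 0) (pp 0), 0 ≤ g a) ∧
      g (pm 0) = 0 ∧ g (pp 0) = 0 ∧
      ∀ a ∈ Ioo (pm 0) (pp 0), 0 < g a ∧
        ∀ η : ℝ → ℝ, ODESolOn (fun t v ↦ f t v - g a) η (Icc 0 T) → η 0 = a → a < η T := by
  let P (a ε : ℝ) : Prop :=
    ∀ η : ℝ → ℝ, ODESolOn (fun t v ↦ f t v - ε) η (Icc 0 T) → η 0 = a → a < η T
  have hP : ∀ a ∈ Ioo (pm 0) (pp 0), ∀ᶠ z in 𝓝 a ×ˢ 𝓝[>] 0, P z.1 z.2 := fun a ha ↦ by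
    obtain ⟨ε, hε, w, hw, hwa, haw⟩ := exists_strictSubsolOn_lt hf hpm hpp hle
      (Ioo_subset_Icc_self ha) hT (hpmT.trans ha.1.le) (hgrow a ha)
    have hev := eventually_forall_odeSolOn_lt hT hε hw hwa haw
    rw [nhds_prod_eq] at hev
    exact hev.filter_mono (prod_mono_right _ nhdsWithin_le_nhds)
  obtain ⟨g, hg, hg0, hsupp, hgP⟩ := exists_contDiff_support_eq_forall_mem isOpen_Ioo hP ⊤
  have hzero {a : ℝ} (ha : a ∉ Ioo (pm 0) (pp 0)) : g a = 0 := notMem_support.1 (hsupp ▸ ha)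
  have hpos {a : ℝ} (ha : a ∈ Ioo (pm 0) (pp 0)) : 0 < g a :=
    (hg0 a).lt_of_ne' (mem_support.1 (hsupp ▸ ha))
  exact ⟨g, hg.contDiffOn, fun a _ ↦ hg0 a, hzero left_notMem_Ioo, hzero right_notMem_Ioo,
    fun a ha ↦ ⟨hpos ha, hgP a ha⟩⟩

theorem perturbation_function_exists
    (T : ℝ) (hT : 0 < T) (f : ℝ → ℝ → ℝ)
    (hf_cont : Continuous fun q : ℝ × ℝ => f q.1 q.2)
    (hf_C1 : ∀ t, ContDiff ℝ 1 (f t))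
    (hfT : ∀ t v : ℝ, 0 ≤ v → f (t + T) v = f t v)
    (pm pp : ℝ → ℝ) (hpm : XPer T f pm) (hpp : XPer T f pp) (hlt : ∀ t, pm t < pp t)
    (hbasin : ∀ a ∈ Set.Ioo (pm 0) (pp 0), ∀ g : ℝ → ℝ,
      ODESolOn f g (Set.Ici 0) → g 0 = a →
        (∀ t : ℝ, 0 ≤ t → StrictMono fun m : ℕ => g (t + (m : ℝ) * T)) ∧
        TendstoLocallyUniformly (fun (m : ℕ) (t : ℝ) => g (t + (m : ℝ) * T)) pp atTop) :
    ∃ g : ℝ → ℝ, ContDiffOn ℝ (⊤ : ℕ∞) g (Set.Icc (pm 0) (pp 0)) ∧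
      (∀ a ∈ Set.Icc (pm 0) (pp 0), 0 ≤ g a) ∧
      g (pm 0) = 0 ∧ g (pp 0) = 0 ∧
      ∀ a ∈ Set.Ioo (pm 0) (pp 0), 0 < g a ∧
        ∀ η : ℝ → ℝ, ODESolOn (fun t v => f t v - g a) η (Set.Icc 0 T) → η 0 = a →
          a < η T :=
  perturbation_function_exists_general hT.le hf_cont hpm.2.2 hpp.2.2 (fun t ↦ (hlt t).le)
    (by simpa using (hpm.2.1 0).le) fun a ha h hh h₀ ↦ by
      simpa [h₀] using (hbasin a ha h hh h₀).1 0 le_rfl one_pos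
end
end
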